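/- For every integer k ≥ 2 there exists a constant C_k < ∞ such that for every δ ∈ (0, 1], the Lebesgue measure of the set L_δ satisfies |L_δ| ≤ C_k · (log₊ δ)^{k−1} · δ^{−q_k}. -/

import Mathlib

open MeasureTheory Real Set
open scoped ENNReal

noncomputable section

/-- Index set for multi-indices `β = (β₁, β₂) ∈ ℕ²` with `1 ≤ β₁ + β₂ ≤ k`;
its cardinality is `N = (k+1)(k+2)/2 − 1`. -/
def Idx (k : ℕ) : Type :=
  {β : Fin (k + 1) × Fin (k + 1) // 1 ≤ (β.1 : ℕ) + (β.2 : ℕ) ∧ (β.1 : ℕ) + (β.2 : ℕ) ≤ k}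

instance (k : ℕ) : Fintype (Idx k) := by unfold Idx; infer_instance

/-- The phase polynomial `P(ξ; x) = ∑_{1 ≤ |β| ≤ k} x_β ξ₁^{β₁} ξ₂^{β₂}`. -/
def Pphase (k : ℕ) (x : Idx k → ℝ) (ξ : Fin 2 → ℝ) : ℝ :=
  ∑ β : Idx k, x β * ξ 0 ^ (β.1.1 : ℕ) * ξ 1 ^ (β.1.2 : ℕ)

/-- `E_k1(x) = ∫_{[0,1]²} e(P(ξ; x)) dξ` with `e(t) = exp(2πit)`. -/
def Eone (k : ℕ) (x : Idx k → ℝ) : ℂ :=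
  ∫ ξ in Icc (0 : Fin 2 → ℝ) 1, Complex.exp (2 * Real.pi * Complex.I * (Pphase k x ξ))

/-- `L_δ = {x ∈ ℝ^N : sup_{μ∈ℝ} |{ξ ∈ [0,1]² : μ ≤ P(ξ; x) ≤ μ + 1}| > δ}`. -/
def Lset (k : ℕ) (δ : ℝ) : Set (Idx k → ℝ) :=
  {x | ENNReal.ofReal δ <
    ⨆ μ : ℝ, volume {ξ ∈ Icc (0 : Fin 2 → ℝ) 1 |
      μ ≤ Pphase k x ξ ∧ Pphase k x ξ ≤ μ + 1}}

/-!
By Fubini and a dyadic pigeonhole, a phase in `Lset k δ` has many vertical slices that meet one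
level set `{μ ≤ P ≤ μ + 1}` in measure at least `w`. On half of each such intersection, Markov's
inequality bounds the `j`-th vertical derivative of the phase by a multiple of `w⁻¹ ^ j`. So the
phase is controlled at a large set of configurations of `k + 1` horizontally separated nodes.

Conversely, the phases controlled at a given configuration have small volume: in Newton coordinates
along the first variable, a unimodular change of variables, the coefficients are bounded one after
the other, and a node at vertical distance `g` from the chord through the leftmost and rightmost
nodes saves a further factor `1 + W |g|`, where `W` is of order `w⁻¹`. Counting pairs of a phase and
a controlling configuration in two ways gives the estimate; the integrals of `(1 + W |g|)⁻¹` over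
the `k - 1` intermediate nodes produce the power of the logarithm.
-/

section Triangular

variable {ι : Type*}

theorem lmarginal_insert_indicator_one_le [DecidableEq ι] {K : Set (ι → ℝ)} (hK : MeasurableSet K)
    {s : Finset ι} {i : ι} (hi : i ∉ s) {c ℓ : ℝ≥0∞}
    (hc : ∀ x, (∫⋯∫⁻_s, K.indicator 1) x ≤ c) {x : ι → ℝ}
    (hℓ : volume ((· i) '' {z ∈ K | ∀ j ∉ insert i s, z j = x j}) ≤ ℓ) :
    (∫⋯∫⁻_insert i s, K.indicator 1) x ≤ ℓ * c := by
  set A : Set ℝ := (· i) '' {z ∈ K | ∀ j ∉ insert i s, z j = x j}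
  rw [lmarginal_insert _ (measurable_one.indicator hK) hi]
  calc ∫⁻ a, (∫⋯∫⁻_s, K.indicator 1) (Function.update x i a)
      ≤ ∫⁻ a, (toMeasurable volume A).indicator (fun _ => c) a := by
        refine lintegral_mono fun a => ?_
        by_cases ha : a ∈ toMeasurable volume A
        · rw [indicator_of_mem ha]
          exact hc _
        · rw [indicator_of_notMem ha]
          refine ((lintegral_congr fun y => ?_).trans lintegral_zero).le
          refine indicator_of_notMem (fun hy => ha (subset_toMeasurable _ _ ⟨_, ⟨hy, ?_⟩, ?_⟩)) _
          · intro j hj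
            rw [Finset.mem_insert, not_or] at hj
            simp [Function.updateFinset, hj.1, hj.2]
          · simp [Function.updateFinset, hi]
    _ = volume A * c := by
        rw [lintegral_indicator (measurableSet_toMeasurable _ _), lintegral_const,
          Measure.restrict_apply_univ, measure_toMeasurable, mul_comm]
    _ ≤ ℓ * c := by gcongr

variable [Fintype ι] [LinearOrder ι]

theorem volume_le_prod_of_triangular {K : Set (ι → ℝ)} (hK : MeasurableSet K) (ℓ : ι → ℝ)
    (h : ∀ x ∈ K, ∀ y ∈ K, ∀ i, (∀ j < i, x j = y j) → |x i - y i| ≤ ℓ i) :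
    volume K ≤ ∏ i, ENNReal.ofReal (ℓ i) := by
  have key (s : Finset ι) : IsUpperSet (s : Set ι) → ∀ x,
      (∫⋯∫⁻_s, K.indicator 1) x ≤ ∏ i ∈ s, ENNReal.ofReal (ℓ i) := by
    induction s using Finset.induction_on_min with
    | empty =>
      intro _ x
      rw [lmarginal_empty, Finset.prod_empty]
      exact indicator_le_self' (fun _ _ => zero_le) x
    | insert i s hi ih =>
      intro hs x
      have his : i ∉ s := fun h => lt_irrefl _ (hi i h)
      have hs' : IsUpperSet (s : Set ι) := fun a b hab ha =>
        Finset.mem_of_mem_insert_of_ne (hs hab (Finset.mem_insert_of_mem ha))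
          ((hi a ha).trans_le hab).ne'
      rw [Finset.prod_insert his]
      refine lmarginal_insert_indicator_one_le hK his (ih hs')
        ((Real.volume_le_diam _).trans (Metric.ediam_le ?_))
      rintro _ ⟨z, ⟨hz, hzx⟩, rfl⟩ _ ⟨w, ⟨hw, hwx⟩, rfl⟩
      rw [edist_dist, Real.dist_eq]
      refine ENNReal.ofReal_le_ofReal (h z hz w hw i fun j hj => ?_)
      have hjs : j ∉ insert i s := fun hjs => by
        rcases Finset.mem_insert.1 hjs with rfl | hjs
        exacts [hj.false, hj.asymm (hi j hjs)]
      rw [hzx j hjs, hwx j hjs]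
  calc volume K = ∫⁻ x, K.indicator 1 x := (lintegral_indicator_one hK).symm
    _ = (∫⋯∫⁻_Finset.univ, K.indicator 1) 0 := by rw [lmarginal_univ]; rfl
    _ ≤ ∏ i, ENNReal.ofReal (ℓ i) := key _ (by simp [isUpperSet_univ]) 0

theorem lintegral_prod_le_of_triangular {X : ι → Type*} [∀ i, MeasurableSpace (X i)]
    (μ : ∀ i, Measure (X i)) [∀ i, SigmaFinite (μ i)] {g : ι → (∀ i, X i) → ℝ≥0∞} {B : ι → ℝ≥0∞}
    (hg : ∀ i, Measurable (g i)) (hdep : ∀ i x y, (∀ j, i ≤ j → x j = y j) → g i x = g i y)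
    (hB : ∀ i x, ∫⁻ a, g i (Function.update x i a) ∂μ i ≤ B i) :
    ∫⁻ x, ∏ i, g i x ∂Measure.pi μ ≤ ∏ i, B i := by
  have key (s : Finset ι) : ∀ x, (∫⋯∫⁻_s, (fun x => ∏ i ∈ s, g i x) ∂μ) x ≤ ∏ i ∈ s, B i := by
    induction s using Finset.induction_on_max with
    | empty => simp
    | insert i s hi ih =>
      intro x
      have his : i ∉ s := fun h => lt_irrefl _ (hi i h)
      have hm : Measurable fun x => ∏ j ∈ s, g j x := Finset.measurable_prod s fun j _ => hg j
      have hsplit (y : ∀ i, X i) : (∫⋯∫⁻_s, (fun x => ∏ j ∈ insert i s, g j x) ∂μ) y =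
          g i y * (∫⋯∫⁻_s, (fun x => ∏ j ∈ s, g j x) ∂μ) y := by
        refine Eq.trans (lintegral_congr fun z => ?_)
          (lintegral_const_mul _ (hm.comp measurable_updateFinset))
        simp only [Finset.prod_insert his]
        rw [hdep i _ y fun j hj => ?_]
        rw [Function.updateFinset, dif_neg fun h => (hi j h).not_ge hj]
      rw [lmarginal_insert _ (Finset.measurable_prod _ fun j _ => hg j) his, Finset.prod_insert his]
      calc ∫⁻ a, (∫⋯∫⁻_s, (fun x => ∏ j ∈ insert i s, g j x) ∂μ) (Function.update x i a) ∂μ i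
          ≤ ∫⁻ a, g i (Function.update x i a) * ∏ j ∈ s, B j ∂μ i := by
            simp only [hsplit]
            gcongr
            exact ih _
        _ = (∫⁻ a, g i (Function.update x i a) ∂μ i) * ∏ j ∈ s, B j :=
            lintegral_mul_const _ ((hg i).comp (measurable_update x))
        _ ≤ B i * ∏ j ∈ s, B j := by gcongr; exact hB i x
  rcases isEmpty_or_nonempty (∀ i, X i) with hX | ⟨⟨x₀⟩⟩
  · simp [lintegral_of_isEmpty]
  · simpa only [lmarginal_univ] using key Finset.univ x₀

end Triangular

theorem mul_measure_le_lintegral_measure_slice {α β : Type*} [MeasurableSpace α]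
    [MeasurableSpace β] {μ : Measure α} {ν : Measure β} [SFinite μ] [SFinite ν] {E : Set (α × β)}
    (hE : MeasurableSet E) {c : ℝ≥0∞} {s : Set α} (hs : ∀ x ∈ s, c ≤ ν (Prod.mk x ⁻¹' E)) :
    c * μ s ≤ ∫⁻ y, μ ((·, y) ⁻¹' E) ∂ν :=
  calc c * μ s ≤ c * μ {x | c ≤ ν (Prod.mk x ⁻¹' E)} := by gcongr; exact fun x hx => hs x hx
    _ ≤ ∫⁻ x, ν (Prod.mk x ⁻¹' E) ∂μ :=
      mul_meas_ge_le_lintegral (measurable_measure_prodMk_left hE) c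
    _ = ∫⁻ y, μ ((·, y) ⁻¹' E) ∂ν := by
      rw [← Measure.prod_apply hE, Measure.prod_apply_symm hE]

theorem mul_measure_le_prod_inter {α β : Type*} [MeasurableSpace α] [MeasurableSpace β]
    {μ : Measure α} {ν : Measure β} [SFinite ν] {E : Set (α × β)} (hE : MeasurableSet E)
    {B : Set α} (hB : MeasurableSet B) {c : ℝ≥0∞} (hc : ∀ t ∈ B, c ≤ ν (Prod.mk t ⁻¹' E)) :
    c * μ B ≤ μ.prod ν (Prod.fst ⁻¹' B ∩ E) := by
  rw [Measure.prod_apply ((measurable_fst hB).inter hE), ← setLIntegral_const]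
  refine (setLIntegral_mono' hB fun t ht => (hc t ht).trans (measure_mono ?_)).trans
    (setLIntegral_le_lintegral _ _)
  exact fun y hy => ⟨ht, hy⟩

section Dyadic

theorem sum_dyadic_rpow_le {δ γ : ℝ} (hδ : 0 < δ) (hγ : 0 < γ) (m : ℕ) :
    ∑ n ∈ Finset.range (m + 1), (δ * 2 ^ n) ^ γ ≤ 2 ^ γ / (2 ^ γ - 1) * (δ * 2 ^ m) ^ γ := by
  have h1 : (1 : ℝ) < 2 ^ γ := Real.one_lt_rpow one_lt_two hγ
  have hpow (n : ℕ) : (δ * 2 ^ n) ^ γ = δ ^ γ * (2 ^ γ) ^ n := by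
    rw [Real.mul_rpow hδ.le (by positivity), Real.rpow_pow_comm zero_le_two]
  simp_rw [hpow]
  rw [← Finset.mul_sum, geom_sum_eq h1.ne']
  calc δ ^ γ * (((2 ^ γ) ^ (m + 1) - 1) / (2 ^ γ - 1))
      ≤ δ ^ γ * ((2 ^ γ) ^ (m + 1) / (2 ^ γ - 1)) := by
        have : 0 ≤ (2 : ℝ) ^ γ - 1 := by linarith
        gcongr
        exact sub_le_self _ zero_le_one
    _ = 2 ^ γ / (2 ^ γ - 1) * (δ ^ γ * (2 ^ γ) ^ m) := by rw [pow_succ]; ring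

theorem measure_le_of_subset_iUnion_dyadic {α : Type*} [MeasurableSpace α] {μ : Measure α}
    {δ γ a b : ℝ} (hδ : 0 < δ) (hγ : 0 < γ) {m : ℕ} (hm : δ * 2 ^ m ≤ b) (ha : 0 ≤ a)
    {L : Set α} {s : ℕ → Set α} (hL : L ⊆ ⋃ j ∈ Finset.range (m + 1), s j)
    (hs : ∀ j, δ * 2 ^ j ≤ b → μ (s j) ≤ ENNReal.ofReal (a * (δ * 2 ^ j) ^ γ)) :
    μ L ≤ ENNReal.ofReal (a * (2 ^ γ / (2 ^ γ - 1) * b ^ γ)) := by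
  have hb : 0 < (2 : ℝ) ^ γ - 1 := sub_pos.2 (Real.one_lt_rpow one_lt_two hγ)
  calc μ L ≤ ∑ j ∈ Finset.range (m + 1), μ (s j) :=
        (measure_mono hL).trans (measure_biUnion_finset_le _ _)
    _ ≤ ∑ j ∈ Finset.range (m + 1), ENNReal.ofReal (a * (δ * 2 ^ j) ^ γ) := by
        gcongr with j hj
        refine hs j (le_trans ?_ hm)
        gcongr
        exacts [one_le_two, Finset.mem_range_succ_iff.1 hj]
    _ = ENNReal.ofReal (a * ∑ j ∈ Finset.range (m + 1), (δ * 2 ^ j) ^ γ) := by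
        rw [← ENNReal.ofReal_sum_of_nonneg fun _ _ => by positivity, Finset.mul_sum]
    _ ≤ ENNReal.ofReal (a * (2 ^ γ / (2 ^ γ - 1) * (δ * 2 ^ m) ^ γ)) := by
        gcongr
        exact sum_dyadic_rpow_le hδ hγ m
    _ ≤ ENNReal.ofReal (a * (2 ^ γ / (2 ^ γ - 1) * b ^ γ)) := by gcongr

theorem le_sum_dyadic_levels {a : ℝ≥0∞} (ha : a ≤ 1) (m : ℕ) :
    a ≤ ENNReal.ofReal (2⁻¹ ^ m) + ∑ n ∈ Finset.range (m + 1),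
      if ENNReal.ofReal (2⁻¹ ^ n) ≤ a then ENNReal.ofReal (2 * 2⁻¹ ^ n) else 0 := by
  induction m with
  | zero => exact le_add_right (by simpa using ha)
  | succ m ih =>
    rcases le_or_gt (ENNReal.ofReal (2⁻¹ ^ (m + 1))) a with h | h
    · have hdouble : (2 : ℝ) * 2⁻¹ ^ (m + 1) = 2⁻¹ ^ m := by rw [pow_succ]; ring
      rw [Finset.sum_range_succ, if_pos h, hdouble, add_comm _ (ENNReal.ofReal (2⁻¹ ^ m))]
      exact le_add_left ih
    · exact le_add_right h.le

theorem lintegral_le_sum_dyadic_levels {α : Type*} [MeasurableSpace α] {μ : Measure α}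
    [IsProbabilityMeasure μ] {f : α → ℝ≥0∞} (hf : Measurable f) (hf1 : ∀ t, f t ≤ 1) (m : ℕ) :
    ∫⁻ t, f t ∂μ ≤ ENNReal.ofReal (2⁻¹ ^ m) + ∑ n ∈ Finset.range (m + 1),
      ENNReal.ofReal (2 * 2⁻¹ ^ n) * μ {t | ENNReal.ofReal (2⁻¹ ^ n) ≤ f t} := by
  classical
  have hlevel (n : ℕ) : MeasurableSet {t | ENNReal.ofReal (2⁻¹ ^ n) ≤ f t} :=
    measurableSet_le measurable_const hf
  simp_rw [← lintegral_indicator_const (hlevel _)]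
  rw [← lintegral_finsetSum _ fun n _ => measurable_const.indicator (hlevel n)]
  calc ∫⁻ t, f t ∂μ ≤ ∫⁻ t, (ENNReal.ofReal (2⁻¹ ^ m) + ∑ n ∈ Finset.range (m + 1),
          {t | ENNReal.ofReal (2⁻¹ ^ n) ≤ f t}.indicator
            (fun _ => ENNReal.ofReal (2 * 2⁻¹ ^ n)) t) ∂μ := by
        gcongr with t
        simpa only [indicator_apply, mem_ofPred_eq] using le_sum_dyadic_levels (hf1 t) m
    _ = _ := by
        rw [lintegral_add_left measurable_const, lintegral_const, measure_univ, mul_one]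

theorem exists_dyadic_level {ε : ℝ} (hε : 0 < ε) : ∃ c : ℝ, 0 < c ∧
    ∀ {α : Type*} [MeasurableSpace α] (μ : Measure α) [IsProbabilityMeasure μ] (f : α → ℝ≥0∞),
    Measurable f → (∀ t, f t ≤ 1) → ∀ δ : ℝ, 0 < δ → ENNReal.ofReal δ < ∫⁻ t, f t ∂μ →
    ∀ m : ℕ, 2 ≤ δ * 2 ^ m → δ * 2 ^ m ≤ 4 → ∃ n ≤ m,
      ENNReal.ofReal (c * (δ * 2 ^ n) ^ (1 + ε)) ≤ μ {t | ENNReal.ofReal (2⁻¹ ^ n) ≤ f t} := by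
  have hb : 0 < (2 : ℝ) ^ ε - 1 := sub_pos.2 (Real.one_lt_rpow one_lt_two hε)
  set A : ℝ := 2 ^ ε / (2 ^ ε - 1) * 4 ^ ε
  have hA : 0 < A := by positivity
  refine ⟨1 / (4 * A), by positivity, fun μ _ f hf hf1 δ hδ hmean m hm2 hm4 => ?_⟩
  by_contra! hcon
  have hsum : ∑ n ∈ Finset.range (m + 1), (δ * 2 ^ n) ^ ε ≤ A :=
    (sum_dyadic_rpow_le hδ hε m).trans <| mul_le_mul_of_nonneg_left (by gcongr) (by positivity)
  have htail : (2⁻¹ : ℝ) ^ m ≤ δ / 2 := by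
    rw [inv_pow, inv_le_iff_one_le_mul₀ (by positivity)]
    linarith
  have hterm (n : ℕ) :
      2 * 2⁻¹ ^ n * (1 / (4 * A) * (δ * 2 ^ n) ^ (1 + ε)) = δ / (2 * A) * (δ * 2 ^ n) ^ ε := by
    rw [Real.rpow_add (by positivity), Real.rpow_one, inv_pow]
    field_simp
    norm_num
  refine hmean.not_ge ((lintegral_le_sum_dyadic_levels hf hf1 m).trans ?_)
  calc _ ≤ ENNReal.ofReal (δ / 2) + ∑ n ∈ Finset.range (m + 1), ENNReal.ofReal (2 * 2⁻¹ ^ n) *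
        ENNReal.ofReal (1 / (4 * A) * (δ * 2 ^ n) ^ (1 + ε)) := by
        gcongr with n hn
        exact (hcon n (Finset.mem_range_succ_iff.1 hn)).le
    _ = ENNReal.ofReal (δ / 2 +
        δ / (2 * A) * ∑ n ∈ Finset.range (m + 1), (δ * 2 ^ n) ^ ε) := by
        rw [Finset.mul_sum, ENNReal.ofReal_add (by positivity) (by positivity),
          ENNReal.ofReal_sum_of_nonneg fun _ _ => by positivity]
        congr! 2 with n
        rw [← ENNReal.ofReal_mul (by positivity), hterm]
    _ ≤ ENNReal.ofReal (δ / 2 + δ / (2 * A) * A) := by gcongr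
    _ = ENNReal.ofReal δ := by congr 1; field_simp; norm_num

end Dyadic

section Kernels

theorem setLIntegral_comp_abs_le (g : ℝ → ℝ≥0∞) (a : ℝ) :
    ∫⁻ u in Icc (-a) a, g |u| ≤ 2 * ∫⁻ u in Icc 0 a, g u := by
  have hpos : ∫⁻ u in Icc 0 a, g |u| = ∫⁻ u in Icc 0 a, g u :=
    setLIntegral_congr_fun measurableSet_Icc fun u hu => by rw [abs_of_nonneg hu.1]
  have hneg : ∫⁻ u in Icc (-a) 0, g |u| = ∫⁻ u in Icc 0 a, g u := by
    rw [← hpos, ← (Measure.measurePreserving_neg volume).setLIntegral_comp_preimage_emb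
      (MeasurableEquiv.neg ℝ).measurableEmbedding]
    simp
  calc ∫⁻ u in Icc (-a) a, g |u| ≤ ∫⁻ u in Icc (-a) 0 ∪ Icc 0 a, g |u| :=
        lintegral_mono_set Icc_subset_Icc_union_Icc
    _ ≤ _ := lintegral_union_le _ _ _
    _ = 2 * ∫⁻ u in Icc 0 a, g u := by rw [hneg, hpos, two_mul]

/-- The Riesz kernel `|u| ^ (-e)` on the line, truncated to `[-1, 1]`. It integrates the gain
obtained from a difference of first coordinates of nodes. -/
def rieszKernel (e u : ℝ) : ℝ≥0∞ :=
  (Icc (-1 : ℝ) 1).indicator (fun u => ENNReal.ofReal (|u| ^ (-e))) u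

/-- The kernel `(1 + W |u|)⁻¹`, truncated to `[-1, 1]`. It integrates the gain obtained from the
gap between a node and a chord. -/
def gapKernel (W u : ℝ) : ℝ≥0∞ :=
  (Icc (-1 : ℝ) 1).indicator (fun u => ENNReal.ofReal (1 + W * |u|)⁻¹) u

@[fun_prop]
theorem measurable_rieszKernel (e : ℝ) : Measurable (rieszKernel e) :=
  Measurable.indicator (by fun_prop) measurableSet_Icc

@[fun_prop]
theorem measurable_gapKernel (W : ℝ) : Measurable (gapKernel W) :=
  Measurable.indicator (by fun_prop) measurableSet_Icc

theorem lintegral_rieszKernel_lt_top {e : ℝ} (he : e < 1) : ∫⁻ u, rieszKernel e u < ∞ := by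
  have hint : IntegrableOn (fun u : ℝ => u ^ (-e)) (Icc 0 1) := by
    rw [integrableOn_Icc_iff_integrableOn_Ioc]
    exact (intervalIntegral.intervalIntegrable_rpow' (by linarith)).1
  simp only [rieszKernel, lintegral_indicator measurableSet_Icc]
  exact (setLIntegral_comp_abs_le (fun u => ENNReal.ofReal (u ^ (-e))) 1).trans_lt
    (ENNReal.mul_lt_top ENNReal.ofNat_lt_top hint.setLIntegral_lt_top)

theorem lintegral_gapKernel_le {W : ℝ} (hW : 0 < W) :
    ∫⁻ u, gapKernel W u ≤ ENNReal.ofReal (2 * log (1 + W) / W) := by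
  have hpos : ∀ u ∈ Icc (0 : ℝ) 1, 0 < 1 + W * u := fun u hu => by have := hu.1; positivity
  have hcont : ContinuousOn (fun u => (1 + W * u)⁻¹) (Icc 0 1) :=
    ContinuousOn.inv₀ (by fun_prop) fun u hu => (hpos u hu).ne'
  have hlog : ∫ u in Icc (0 : ℝ) 1, (1 + W * u)⁻¹ = log (1 + W) / W := by
    rw [integral_Icc_eq_integral_Ioc, ← intervalIntegral.integral_of_le zero_le_one,
      intervalIntegral.integral_comp_add_mul (fun x => x⁻¹) hW.ne' 1,
      integral_inv_of_pos (by simp) (by positivity)]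
    simp [div_eq_inv_mul]
  simp only [gapKernel, lintegral_indicator measurableSet_Icc]
  calc ∫⁻ u in Icc (-1 : ℝ) 1, ENNReal.ofReal (1 + W * |u|)⁻¹
      ≤ 2 * ∫⁻ u in Icc (0 : ℝ) 1, ENNReal.ofReal (1 + W * u)⁻¹ :=
        setLIntegral_comp_abs_le (fun u => ENNReal.ofReal (1 + W * u)⁻¹) 1
    _ = ENNReal.ofReal (2 * log (1 + W) / W) := by
        rw [← ofReal_integral_eq_lintegral_ofReal hcont.integrableOn_Icc, hlog, mul_div_assoc,
          ENNReal.ofReal_mul zero_le_two, ENNReal.ofReal_ofNat]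
        exact (ae_restrict_mem measurableSet_Icc).mono fun u hu => (inv_pos.2 (hpos u hu)).le

end Kernels

section Blocks

variable {T : Set ℝ}

theorem measureReal_inter_Iic_sub (hT : MeasurableSet T) (hfin : volume T ≠ ∞) {s t : ℝ}
    (hst : s ≤ t) :
    volume.real (T ∩ Iic t) - volume.real (T ∩ Iic s) = volume.real (T ∩ Ioc s t) := by
  have hfin' (U : Set ℝ) : volume (T ∩ U) ≠ ∞ := measure_ne_top_of_subset inter_subset_left hfin
  have hdisj : Disjoint (Iic s) (Ioc s t) :=
    Set.disjoint_left.2 fun _ hx hx' => hx'.1.not_ge hx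
  rw [← Iic_union_Ioc_eq_Iic hst, inter_union_distrib_left, measureReal_union
    (hdisj.mono inter_subset_right inter_subset_right) (hT.inter measurableSet_Ioc)
    (hfin' _) (hfin' _), add_sub_cancel_left]

theorem measureReal_inter_Ioc_le {s t : ℝ} (hst : s ≤ t) : volume.real (T ∩ Ioc s t) ≤ t - s :=
  (measureReal_mono inter_subset_right (by simp)).trans_eq (Real.volume_real_Ioc_of_le hst)

theorem monotone_measureReal_inter_Iic (hfin : volume T ≠ ∞) :
    Monotone fun s => volume.real (T ∩ Iic s) := fun _ _ hst =>
  measureReal_mono (by gcongr) (measure_ne_top_of_subset inter_subset_left hfin)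

theorem continuous_measureReal_inter_Iic (hT : MeasurableSet T) (hfin : volume T ≠ ∞) :
    Continuous fun s => volume.real (T ∩ Iic s) := by
  refine (LipschitzWith.of_le_add fun s t => ?_).continuous
  rcases le_total s t with h | h
  · exact (monotone_measureReal_inter_Iic hfin h).trans (le_add_of_nonneg_right dist_nonneg)
  · rw [Real.dist_eq, abs_of_nonneg (sub_nonneg.2 h)]
    linarith [measureReal_inter_Iic_sub hT hfin h, measureReal_inter_Ioc_le (T := T) h]

theorem exists_measureReal_inter_Iic_eq {a b : ℝ} (hT : MeasurableSet T) (hab : T ⊆ Icc a b)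
    {c : ℝ} (hc : c ∈ Icc 0 (volume.real T)) : ∃ s, volume.real (T ∩ Iic s) = c := by
  have hfin : volume T ≠ ∞ := measure_ne_top_of_subset hab (by simp)
  have ha : volume.real (T ∩ Iic a) = 0 := by
    rw [measureReal_def, measure_mono_null (t := {a}) (fun x hx => hx.2.antisymm (hab hx.1).1)
      (by simp), ENNReal.toReal_zero]
  have hb : volume.real (T ∩ Iic b) = volume.real T := by
    rw [inter_eq_left.2 (hab.trans Icc_subset_Iic_self)]
  exact mem_range_of_exists_le_of_exists_ge (continuous_measureReal_inter_Iic hT hfin)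
    ⟨a, ha.trans_le hc.1⟩ ⟨b, hc.2.trans_eq hb.symm⟩

-- Cut `T` at its `2n`-quantiles and keep every other piece: both the pieces and the gaps have
-- `T`-measure `v / (2n)`.
theorem exists_separated_blocks {a b : ℝ} (hT : MeasurableSet T) (hab : T ⊆ Icc a b) {v : ℝ}
    (hv : 0 < v) (hvT : ENNReal.ofReal v ≤ volume T) (n : ℕ) :
    ∃ B : Fin n → Set ℝ, (∀ i, MeasurableSet (B i)) ∧ (∀ i, B i ⊆ T) ∧
      (∀ i, ENNReal.ofReal (v / (2 * n)) ≤ volume (B i)) ∧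
      ∀ i j, i < j → ∀ s ∈ B i, ∀ t ∈ B j, s + v / (2 * n) ≤ t := by
  have hfin : volume T ≠ ∞ := measure_ne_top_of_subset hab (by simp)
  have hmono := monotone_measureReal_inter_Iic hfin
  rcases n.eq_zero_or_pos with rfl | hn
  · exact ⟨fun _ => ∅, by simp⟩
  set d : ℝ := v / (2 * n)
  have hd : 0 < d := by positivity
  have hquantile (j : Fin (2 * n)) : ∃ s, volume.real (T ∩ Iic s) = j * d := by
    refine exists_measureReal_inter_Iic_eq hT hab ⟨by positivity, ?_⟩
    calc (j : ℝ) * d ≤ (2 * n) * d := by gcongr; exact_mod_cast j.2.le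
      _ = v := mul_div_cancel₀ _ (by positivity)
      _ ≤ volume.real T := (ENNReal.ofReal_le_iff_le_toReal hfin).1 hvT
  choose s hs using hquantile
  have hgap {i j : Fin (2 * n)} (hij : i < j) :
      s i ≤ s j ∧ d ≤ volume.real (T ∩ Ioc (s i) (s j)) := by
    have hij' : (i : ℝ) + 1 ≤ j := by exact_mod_cast hij
    have hlt : s i < s j := hmono.reflect_lt (by simp only [hs]; nlinarith)
    exact ⟨hlt.le, by rw [← measureReal_inter_Iic_sub hT hfin hlt.le, hs, hs]; nlinarith⟩
  refine ⟨fun i => T ∩ Ioc (s ⟨2 * i, by omega⟩) (s ⟨2 * i + 1, by omega⟩),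
    fun i => hT.inter measurableSet_Ioc, fun i => inter_subset_left, fun i => ?_,
    fun i j hij x hx y hy => ?_⟩
  · rw [ENNReal.ofReal_le_iff_le_toReal (measure_ne_top_of_subset inter_subset_left hfin)]
    exact (hgap (Fin.mk_lt_mk.2 (Nat.lt_succ_self _))).2
  · obtain ⟨hle, hd'⟩ := hgap (i := ⟨2 * i + 1, by omega⟩) (j := ⟨2 * j, by omega⟩)
      (Fin.mk_lt_mk.2 (by omega))
    linarith [measureReal_inter_Ioc_le (T := T) hle, hx.2.2, hy.2.1]

end Blocks

section Markov

open Polynomial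

theorem abs_coeff_le_of_abs_eval_le {ι : Type*} [DecidableEq ι] {s : Finset ι} {v : ι → ℝ}
    (hv : InjOn v s) {p : ℝ[X]} (hp : p.degree < s.card) {B : ℝ} (hB : ∀ i ∈ s, |p.eval (v i)| ≤ B)
    (j : ℕ) : |p.coeff j| ≤ B * ∑ i ∈ s, |(Lagrange.basis s v i).coeff j| := by
  conv_lhs => rw [Lagrange.eq_interpolate hv hp, Lagrange.interpolate_apply, finsetSum_coeff]
  rw [Finset.mul_sum]
  refine (Finset.abs_sum_le_sum_abs _ _).trans (Finset.sum_le_sum fun i hi => ?_)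
  rw [coeff_C_mul, abs_mul]
  gcongr
  exact hB i hi

theorem exists_coeff_bound (k : ℕ) : ∃ C : ℝ, 1 ≤ C ∧ ∀ p : ℝ[X], p.natDegree ≤ k →
    (∀ z ∈ Icc (0 : ℝ) 1, |p.eval z| ≤ 1) → ∀ j, |p.coeff j| ≤ C := by
  set v : ℕ → ℝ := fun i => i / k
  set A : ℕ → ℝ := fun j =>
    ∑ i ∈ Finset.range (k + 1), |(Lagrange.basis (Finset.range (k + 1)) v i).coeff j|
  have hA (j : ℕ) : 0 ≤ A j := Finset.sum_nonneg fun _ _ => abs_nonneg _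
  have hv : InjOn v (Finset.range (k + 1)) := fun i hi j hj hij => by
    rw [Finset.coe_range, mem_Iio, Nat.lt_succ_iff] at hi hj
    rcases k.eq_zero_or_pos with rfl | hk
    · omega
    · exact Nat.cast_injective ((div_left_inj' (by positivity)).1 hij)
  refine ⟨1 + ∑ j ∈ Finset.range (k + 1), A j,
    le_add_of_nonneg_right (Finset.sum_nonneg fun j _ => hA j), fun p hp hp1 j => ?_⟩
  rcases lt_or_ge k j with hkj | hjk
  · rw [coeff_eq_zero_of_natDegree_lt (hp.trans_lt hkj), abs_zero]
    exact add_nonneg zero_le_one (Finset.sum_nonneg fun j _ => hA j)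
  have hdeg : p.degree < (Finset.range (k + 1)).card := by
    rw [Finset.card_range]
    exact degree_le_natDegree.trans_lt (by exact_mod_cast Nat.lt_succ_of_le hp)
  have heval : ∀ i ∈ Finset.range (k + 1), |p.eval (v i)| ≤ 1 := fun i hi =>
    hp1 _ ⟨by positivity, div_le_one_of_le₀
      (by exact_mod_cast Finset.mem_range_succ_iff.1 hi) k.cast_nonneg⟩
  calc |p.coeff j| ≤ 1 * A j := abs_coeff_le_of_abs_eval_le hv hdeg heval j
    _ ≤ ∑ j ∈ Finset.range (k + 1), A j := (one_mul (A j)).trans_le <|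
      Finset.single_le_sum (fun j _ => hA j) (Finset.mem_range_succ_iff.2 hjk)
    _ ≤ 1 + ∑ j ∈ Finset.range (k + 1), A j := le_add_of_nonneg_left zero_le_one

theorem exists_markov_bound (k : ℕ) : ∃ C : ℝ, 1 ≤ C ∧ ∀ p : ℝ[X], p.natDegree ≤ k →
    ∀ y H : ℝ, 0 < H → (∀ z ∈ Icc y (y + H), |p.eval z - p.eval y| ≤ 1) →
    ∀ j, 1 ≤ j → |(hasseDeriv j p).eval y| ≤ (C / H) ^ j := by
  obtain ⟨C, hC, hcoeff⟩ := exists_coeff_bound k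
  refine ⟨C, hC, fun p hp y H hH hosc j hj => ?_⟩
  set q : ℝ[X] := (taylor y p - Polynomial.C (p.eval y)).comp (Polynomial.C H * X) with hq
  have hqdeg : q.natDegree ≤ k := by
    refine natDegree_comp_le.trans ?_
    rwa [natDegree_sub_C, natDegree_taylor, natDegree_C_mul_X _ hH.ne', mul_one]
  have hqeval : ∀ z ∈ Icc (0 : ℝ) 1, |q.eval z| ≤ 1 := fun z hz => by
    simpa [hq, taylor_eval] using
      hosc (H * z + y) ⟨by nlinarith [hz.1], by nlinarith [hz.2]⟩
  have hqcoeff : q.coeff j = (hasseDeriv j p).eval y * H ^ j := by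
    rw [hq, comp_C_mul_X_coeff, coeff_sub, coeff_C, if_neg (by omega), sub_zero, taylor_coeff]
  calc |(hasseDeriv j p).eval y| = |q.coeff j| / H ^ j := by
        rw [hqcoeff, abs_mul, abs_of_pos (pow_pos hH j), mul_div_cancel_right₀ _ (by positivity)]
    _ ≤ C / H ^ j := by gcongr; exact hcoeff q hqdeg hqeval j
    _ ≤ C ^ j / H ^ j := by gcongr; exact le_self_pow₀ hC (by omega)
    _ = (C / H) ^ j := (div_pow _ _ _).symm

theorem eval_nonpos_of_forall_root_notMem {q : ℝ[X]} {y z : ℝ} (hy : q.eval y ≤ 0)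
    (hq : ∀ ρ ∈ q.roots, ρ ∉ Icc y z) (hyz : y ≤ z) : q.eval z ≤ 0 := by
  by_contra! hz
  obtain ⟨ρ, hρ, hρ0⟩ := intermediate_value_Icc hyz q.continuousOn ⟨hy, hz.le⟩
  refine hq ρ ((mem_roots ?_).2 hρ0) hρ
  rintro rfl
  simp at hz

theorem volume_setOf_root_mem_Icc_le (q : ℝ[X]) (H : ℝ) :
    volume {y | ∃ ρ ∈ q.roots, ρ ∈ Icc y (y + H)} ≤ q.natDegree * ENNReal.ofReal H := by
  have hcover : {y | ∃ ρ ∈ q.roots, ρ ∈ Icc y (y + H)} = ⋃ ρ ∈ q.roots.toFinset, Icc (ρ - H) ρ := by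
    ext y
    simp only [mem_ofPred_eq, mem_Icc, mem_iUnion, Multiset.mem_toFinset, exists_prop,
      sub_le_iff_le_add, and_comm]
  rw [hcover]
  calc _ ≤ ∑ ρ ∈ q.roots.toFinset, volume (Icc (ρ - H) ρ) := measure_biUnion_finset_le _ _
    _ = q.roots.toFinset.card * ENNReal.ofReal H := by simp
    _ ≤ _ := by
      gcongr
      exact (Multiset.toFinset_card_le _).trans q.card_roots'

-- The excluded points lie close to the roots of `(p - μ) (p - μ - 1)`, of which there are few.
theorem ofReal_half_le_volume_forall_Icc_mem {p : ℝ[X]} {k : ℕ} (hp : p.natDegree ≤ k) {μ w : ℝ}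
    (hw : 0 < w) {S : Set ℝ} (hS : ∀ y ∈ S, p.eval y ∈ Icc μ (μ + 1))
    (hwS : ENNReal.ofReal w ≤ volume S) : ENNReal.ofReal (w / 2) ≤
      volume {y ∈ S | ∀ z ∈ Icc y (y + w / (4 * (k + 1))), p.eval z ∈ Icc μ (μ + 1)} := by
  set H : ℝ := w / (4 * (k + 1)) with hH
  set q : ℝ[X] := (p - C μ) * (p - C (μ + 1)) with hq
  have hsublevel (z : ℝ) : q.eval z ≤ 0 ↔ p.eval z ∈ Icc μ (μ + 1) := by
    simp only [hq, eval_mul, eval_sub, eval_C, mul_nonpos_iff, mem_Icc]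
    constructor
    · rintro (h | h) <;> constructor <;> linarith
    · exact fun h => Or.inl ⟨by linarith, by linarith⟩
  have hqdeg : q.natDegree ≤ 2 * (k + 1) :=
    natDegree_mul_le.trans (by simp only [natDegree_sub_C]; omega)
  set bad : Set ℝ := {y | ∃ ρ ∈ q.roots, ρ ∈ Icc y (y + H)}
  have hbad : volume bad ≤ ENNReal.ofReal (w / 2) := by
    calc volume bad ≤ q.natDegree * ENNReal.ofReal H := volume_setOf_root_mem_Icc_le q H
      _ ≤ (2 * (k + 1) : ℕ) * ENNReal.ofReal H := by gcongr
      _ = ENNReal.ofReal (w / 2) := by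
        rw [← ENNReal.ofReal_natCast, ← ENNReal.ofReal_mul (by positivity), hH]
        congr 1
        push_cast
        field_simp
        norm_num
  calc ENNReal.ofReal (w / 2) = ENNReal.ofReal w - ENNReal.ofReal (w / 2) := by
        rw [← ENNReal.ofReal_sub _ (by positivity), sub_half]
    _ ≤ volume S - volume bad := tsub_le_tsub hwS hbad
    _ ≤ volume (S \ bad) := le_measure_sdiff
    _ ≤ _ := measure_mono ?_
  rintro y ⟨hyS, hybad⟩
  exact ⟨hyS, fun z hz => (hsublevel z).1 <|
    eval_nonpos_of_forall_root_notMem ((hsublevel y).2 (hS y hyS))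
      (fun ρ hρ hmem => hybad ⟨ρ, hρ, hmem.1, hmem.2.trans hz.2⟩) hz.1⟩

theorem exists_hasseDeriv_bound_on_half (k : ℕ) : ∃ C : ℝ, 1 ≤ C ∧ ∀ p : ℝ[X],
    p.natDegree ≤ k → ∀ μ w : ℝ, 0 < w → ∀ S : Set ℝ, (∀ y ∈ S, p.eval y ∈ Icc μ (μ + 1)) →
    ENNReal.ofReal w ≤ volume S → ENNReal.ofReal (w / 2) ≤
      volume {y ∈ S | ∀ j, 1 ≤ j → |(hasseDeriv j p).eval y| ≤ (C / w) ^ j} := by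
  obtain ⟨C, hC, hmarkov⟩ := exists_markov_bound k
  refine ⟨4 * (k + 1) * C, by nlinarith [k.cast_nonneg (α := ℝ)], fun p hp μ w hw S hS hwS => ?_⟩
  refine (ofReal_half_le_volume_forall_Icc_mem hp hw hS hwS).trans (measure_mono ?_)
  rintro y ⟨hyS, hy⟩
  refine ⟨hyS, fun j hj => ?_⟩
  refine (hmarkov p hp y (w / (4 * (k + 1))) (by positivity) (fun z hz => ?_) j hj).trans_eq ?_
  · rw [abs_sub_le_iff]
    constructor <;> linarith [(hy z hz).1, (hy z hz).2, (hS y hyS).1, (hS y hyS).2]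
  · rw [div_div_eq_mul_div, mul_comm C]

end Markov

section Indices

variable {k : ℕ}

/-- The order in which the Newton coefficients of a phase are eliminated: increasing degree in
`ξ₁` and, for equal degree in `ξ₁`, decreasing degree in `ξ₂`. -/
instance : LinearOrder (Idx k) :=
  LinearOrder.lift' (fun β => toLex (β.1.1, OrderDual.toDual β.1.2)) fun _ _ h =>
    Subtype.ext (toLex.injective h)

theorem Idx.lt_iff {β γ : Idx k} :
    β < γ ↔ β.1.1 < γ.1.1 ∨ β.1.1 = γ.1.1 ∧ γ.1.2 < β.1.2 :=
  Prod.Lex.toLex_lt_toLex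

@[to_additive]
theorem Idx.prod_eq {M : Type*} [CommMonoid M] (f : Fin (k + 1) → Fin (k + 1) → M) :
    ∏ β : Idx k, f β.1.1 β.1.2 =
      ∏ a : Fin (k + 1), ∏ b : Fin (k + 1),
        if 1 ≤ (a : ℕ) + b ∧ (a : ℕ) + b ≤ k then f a b else 1 := by
  rw [← Fintype.prod_prod_type' (f := fun a b : Fin (k + 1) =>
    if 1 ≤ (a : ℕ) + b ∧ (a : ℕ) + b ≤ k then f a b else 1), ← Finset.prod_filter]
  exact (Finset.prod_subtype _ (by simp)
    (fun β : Fin (k + 1) × Fin (k + 1) => f β.1 β.2)).symm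

theorem Idx.prod_ite_add_eq {M : Type*} [CommMonoid M] (hk : 1 ≤ k) (f : Fin (k + 1) → M) :
    (∏ β : Idx k, if (β.1.1 : ℕ) + β.1.2 = k then f β.1.1 else 1) = ∏ a, f a := by
  rw [Idx.prod_eq fun a b => if (a : ℕ) + b = k then f a else 1]
  refine Finset.prod_congr rfl fun a _ => ?_
  have hrev : (a : ℕ) + a.rev = k := by rw [Fin.val_rev]; omega
  rw [Fintype.prod_eq_single a.rev fun b hb => ?_, if_pos (by omega), if_pos hrev]
  have hne : (a : ℕ) + b ≠ k := fun h => hb (Fin.ext (by omega))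
  simp only [hne, if_false, ite_self]

theorem Idx.sum_fst_eq_sum_snd : ∑ β : Idx k, (β.1.1 : ℕ) = ∑ β : Idx k, (β.1.2 : ℕ) := by
  rw [Idx.sum_eq fun a _ => (a : ℕ), Idx.sum_eq fun _ b => (b : ℕ), Finset.sum_comm]
  simp_rw [add_comm]

theorem six_mul_sum_range_mul_sub (k : ℕ) :
    6 * ∑ a ∈ Finset.range (k + 1), a * (k + 1 - a) = k * (k + 1) * (k + 2) := by
  induction k with
  | zero => rfl
  | succ k ih =>
    have hsucc : ∀ a ∈ Finset.range (k + 2), a * (k + 2 - a) = a * (k + 1 - a) + a := by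
      intro a ha
      rw [show k + 2 - a = k + 1 - a + 1 by grind, mul_add_one]
    have hgauss := Finset.sum_range_id_mul_two (k + 2)
    rw [Finset.sum_congr rfl hsucc, Finset.sum_add_distrib, Finset.sum_range_succ, Nat.sub_self,
      mul_zero, add_zero, mul_add, ih]
    simp only [Nat.add_one_sub_one] at hgauss
    linarith

theorem Idx.six_mul_sum_snd (k : ℕ) : 6 * ∑ β : Idx k, (β.1.2 : ℕ) = k * (k + 1) * (k + 2) := by
  rw [← Idx.sum_fst_eq_sum_snd, Idx.sum_eq fun a _ => (a : ℕ), ← six_mul_sum_range_mul_sub,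
    Finset.sum_range]
  refine congrArg _ (Finset.sum_congr rfl fun a _ => ?_)
  rcases Nat.eq_zero_or_pos (a : ℕ) with h0 | h0
  · simp [h0]
  have hcard : ∀ b : Fin (k + 1), 1 ≤ (a : ℕ) + b ∧ (a : ℕ) + b ≤ k ↔ b ≤ a.rev := by
    intro b
    rw [Fin.le_def, Fin.val_rev]
    omega
  simp_rw [hcard]
  rw [← Finset.sum_filter, Finset.sum_const, Finset.filter_ge_eq_Iic, Fin.card_Iic, Fin.val_rev,
    smul_eq_mul, mul_comm, show k + 1 - (a + 1) + 1 = k + 1 - (a : ℕ) by omega]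

open Polynomial in
theorem Idx.sum_row_coeff_mul_pow {b : Fin (k + 1)} {p : ℝ[X]} (hp : p.natDegree + b ≤ k)
    (s : ℝ) :
    (∑ β : Idx k, if β.1.2 = b then p.coeff β.1.1 * s ^ (β.1.1 : ℕ) else 0) =
      p.eval s - if b = 0 then p.eval 0 else 0 := by
  rw [Idx.sum_eq fun a b' => if b' = b then p.coeff a * s ^ (a : ℕ) else 0]
  have hrow : ∀ a : Fin (k + 1), (∑ b' : Fin (k + 1), if 1 ≤ (a : ℕ) + b' ∧ (a : ℕ) + b' ≤ k then
      if b' = b then p.coeff a * s ^ (a : ℕ) else 0 else 0) =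
      p.coeff a * s ^ (a : ℕ) - if a = 0 then if b = 0 then p.eval 0 else 0 else 0 := by
    intro a
    rw [Fintype.sum_eq_single b fun b' hb' => by rw [if_neg hb', ite_self], if_pos rfl]
    rcases eq_or_ne a 0 with rfl | ha
    · rcases eq_or_ne b 0 with rfl | hb
      · simp [coeff_zero_eq_eval_zero]
      · rw [if_pos (by grind), if_pos rfl, if_neg hb, sub_zero]
    · rw [if_neg ha, sub_zero]
      split_ifs with h
      · rfl
      · rw [coeff_eq_zero_of_natDegree_lt (by grind), zero_mul]
  simp_rw [hrow]
  rw [Finset.sum_sub_distrib, Finset.sum_ite_eq' Finset.univ, if_pos (Finset.mem_univ _),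
    eval_eq_sum_range' (show p.natDegree < k + 1 by omega) s, Finset.sum_range]

end Indices

section NewtonCoordinates

open Polynomial

variable {k : ℕ}

/-- The Newton polynomial `∏_{l < a} (X - t l)`. -/
def newtonPoly (t : Fin (k + 1) → ℝ) (a : Fin (k + 1)) : ℝ[X] :=
  Lagrange.nodal (Finset.Iio a) t

theorem natDegree_newtonPoly (t : Fin (k + 1) → ℝ) (a : Fin (k + 1)) :
    (newtonPoly t a).natDegree = a := by
  rw [newtonPoly, Lagrange.natDegree_nodal, Fin.card_Iio]

theorem coeff_newtonPoly_self (t : Fin (k + 1) → ℝ) (a : Fin (k + 1)) :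
    (newtonPoly t a).coeff a = 1 := by
  conv_lhs => rw [← natDegree_newtonPoly t a]
  exact Lagrange.nodal_monic

theorem eval_newtonPoly (t : Fin (k + 1) → ℝ) (a : Fin (k + 1)) (s : ℝ) :
    (newtonPoly t a).eval s = ∏ l ∈ Finset.Iio a, (s - t l) :=
  Lagrange.eval_nodal

theorem eval_newtonPoly_node (t : Fin (k + 1) → ℝ) {i a : Fin (k + 1)} (h : i < a) :
    (newtonPoly t a).eval (t i) = 0 :=
  Lagrange.eval_nodal_at_node (Finset.mem_Iio.2 h)

theorem newtonPoly_of_val_eq_add_one (t : Fin (k + 1) → ℝ) {a a' : Fin (k + 1)}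
    (h : (a' : ℕ) = a + 1) : newtonPoly t a' = (X - C (t a)) * newtonPoly t a := by
  have hIio : Finset.Iio a' = insert a (Finset.Iio a) := by
    ext l
    simp only [Finset.mem_insert, Finset.mem_Iio, Fin.ext_iff, Fin.lt_def]
    omega
  rw [newtonPoly, newtonPoly, hIio, Lagrange.nodal_insert_eq_nodal (by simp)]

/-- The matrix taking the coefficients of a phase in the basis of the polynomials
`newtonPoly t a (ξ₁) * ξ₂ ^ b`, stripped of their constant terms, to those in the monomial basis. -/
def newtonMatrix (t : Fin (k + 1) → ℝ) : Matrix (Idx k) (Idx k) ℝ := fun β γ =>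
  if β.1.2 = γ.1.2 then (newtonPoly t γ.1.1).coeff β.1.1 else 0

theorem det_newtonMatrix (t : Fin (k + 1) → ℝ) : (newtonMatrix t).det = 1 := by
  have htri : (newtonMatrix t).IsUpperTriangular := by
    intro β γ (h : γ < β)
    rw [newtonMatrix, ite_eq_right_iff]
    intro hsnd
    refine coeff_eq_zero_of_natDegree_lt ?_
    rw [natDegree_newtonPoly]
    exact (Idx.lt_iff.1 h).resolve_right fun h' => h'.2.ne hsnd
  rw [Matrix.det_of_isUpperTriangular htri]
  exact Finset.prod_eq_one fun β _ => (if_pos rfl).trans (coeff_newtonPoly_self t _)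

/-- The `j`-th Hasse derivative in the second variable of the phase polynomial. -/
def phaseDeriv (x : Idx k → ℝ) (j : ℕ) (q : ℝ × ℝ) : ℝ :=
  ∑ β : Idx k, x β * (q.1 ^ (β.1.1 : ℕ) * ((β.1.2 : ℕ).choose j * q.2 ^ ((β.1.2 : ℕ) - j)))

theorem phaseDeriv_sub (x x' : Idx k → ℝ) (j : ℕ) (q : ℝ × ℝ) :
    phaseDeriv (x - x') j q = phaseDeriv x j q - phaseDeriv x' j q := by
  simp [phaseDeriv, sub_mul, Finset.sum_sub_distrib]

theorem phaseDeriv_newtonMatrix_mulVec (t : Fin (k + 1) → ℝ) (c : Idx k → ℝ) (j : ℕ)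
    (q : ℝ × ℝ) :
    phaseDeriv ((newtonMatrix t).mulVec c) j q =
      ∑ γ : Idx k, c γ * (((newtonPoly t γ.1.1).eval q.1 -
        if γ.1.2 = 0 then (newtonPoly t γ.1.1).eval 0 else 0) *
        ((γ.1.2 : ℕ).choose j * q.2 ^ ((γ.1.2 : ℕ) - j))) := by
  simp_rw [phaseDeriv, Matrix.mulVec, dotProduct, Finset.sum_mul]
  rw [Finset.sum_comm]
  refine Finset.sum_congr rfl fun γ _ => ?_
  rw [← Idx.sum_row_coeff_mul_pow (by rw [natDegree_newtonPoly]; exact γ.2.2), Finset.sum_mul,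
    Finset.mul_sum]
  refine Finset.sum_congr rfl fun β _ => ?_
  rw [newtonMatrix]
  split_ifs with h
  · rw [h]
    ring
  · ring

theorem phaseDeriv_newtonMatrix_mulVec_of_pos (t : Fin (k + 1) → ℝ) (c : Idx k → ℝ) {j : ℕ}
    (hj : 0 < j) (q : ℝ × ℝ) :
    phaseDeriv ((newtonMatrix t).mulVec c) j q =
      ∑ γ : Idx k, c γ * ((newtonPoly t γ.1.1).eval q.1 *
        ((γ.1.2 : ℕ).choose j * q.2 ^ ((γ.1.2 : ℕ) - j))) := by
  rw [phaseDeriv_newtonMatrix_mulVec]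
  refine Finset.sum_congr rfl fun γ _ => ?_
  split_ifs with h
  · simp [h, Nat.choose_eq_zero_of_lt hj]
  · rw [sub_zero]

theorem phaseDeriv_zero_newtonMatrix_mulVec_sub (t : Fin (k + 1) → ℝ) (c : Idx k → ℝ)
    (q q' : ℝ × ℝ) :
    phaseDeriv ((newtonMatrix t).mulVec c) 0 q - phaseDeriv ((newtonMatrix t).mulVec c) 0 q' =
      ∑ γ : Idx k, c γ * ((newtonPoly t γ.1.1).eval q.1 * q.2 ^ (γ.1.2 : ℕ) -
        (newtonPoly t γ.1.1).eval q'.1 * q'.2 ^ (γ.1.2 : ℕ)) := by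
  simp_rw [phaseDeriv_newtonMatrix_mulVec, ← Finset.sum_sub_distrib, ← mul_sub]
  refine Finset.sum_congr rfl fun γ _ => ?_
  split_ifs with h
  · simp [h]
  · simp

theorem phaseDeriv_newtonMatrix_mulVec_node {p : Fin (k + 1) → ℝ × ℝ} {z : Idx k → ℝ}
    {γ : Idx k} (hz : ∀ γ' < γ, z γ' = 0) (hγ : 0 < (γ.1.2 : ℕ)) :
    phaseDeriv ((newtonMatrix fun i => (p i).1).mulVec z) γ.1.2 (p γ.1.1) =
      z γ * (newtonPoly (fun i => (p i).1) γ.1.1).eval (p γ.1.1).1 := by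
  rw [phaseDeriv_newtonMatrix_mulVec_of_pos _ _ hγ, Fintype.sum_eq_single γ fun γ' hne => ?_]
  · simp
  rcases hne.lt_or_gt with hlt | hgt
  · rw [hz _ hlt, zero_mul]
  rcases Idx.lt_iff.1 hgt with hfst | ⟨-, hsnd⟩
  · rw [eval_newtonPoly_node (fun i => (p i).1) hfst]
    ring
  · rw [Nat.choose_eq_zero_of_lt hsnd]
    simp

theorem phaseDeriv_zero_newtonMatrix_mulVec_node_sub {p : Fin (k + 1) → ℝ × ℝ} {z : Idx k → ℝ}
    {γ : Idx k} (hz : ∀ γ' < γ, z γ' = 0) (hγ : (γ.1.2 : ℕ) = 0) :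
    phaseDeriv ((newtonMatrix fun i => (p i).1).mulVec z) 0 (p γ.1.1) -
        phaseDeriv ((newtonMatrix fun i => (p i).1).mulVec z) 0 (p 0) =
      z γ * (newtonPoly (fun i => (p i).1) γ.1.1).eval (p γ.1.1).1 := by
  have hpos : 0 < γ.1.1 := by
    have := γ.2.1
    rw [Fin.pos_iff_ne_zero, Fin.ne_iff_vne, Fin.val_zero]
    omega
  rw [phaseDeriv_zero_newtonMatrix_mulVec_sub, Fintype.sum_eq_single γ fun γ' hne => ?_]
  · simp [hγ, eval_newtonPoly_node (fun i => (p i).1) hpos]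
  rcases hne.lt_or_gt with hlt | hgt
  · rw [hz _ hlt, zero_mul]
  have hfst : γ.1.1 < γ'.1.1 :=
    (Idx.lt_iff.1 hgt).resolve_right fun h => absurd (Fin.lt_def.1 h.2) (by omega)
  simp [eval_newtonPoly_node (fun i => (p i).1) hfst,
    eval_newtonPoly_node (fun i => (p i).1) (hpos.trans hfst)]

end NewtonCoordinates

section NodeConfigurations

/-- The vertical distance, with sign, from the point `q` to the line through `u` and `v`. -/
def chordGap (u v q : ℝ × ℝ) : ℝ :=
  q.2 - (u.2 + (q.1 - u.1) / (v.1 - u.1) * (v.2 - u.2))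

-- Interpolating linearly between `u` and `v` eliminates `d` and `e`.
theorem abs_mul_abs_chordGap_le {u v q : ℝ × ℝ} (huv : u.1 < v.1) (huq : u.1 ≤ q.1)
    (hqv : q.1 ≤ v.1) {c d e Q : ℝ} (hu : |c * u.2 + d + e * u.1| ≤ Q)
    (hv : |c * v.2 + d + e * v.1| ≤ Q) (hq : |c * q.2 + d + e * q.1| ≤ Q) :
    |c| * |chordGap u v q| ≤ 2 * Q := by
  obtain ⟨l, hl⟩ : ∃ l, l = (q.1 - u.1) / (v.1 - u.1) := ⟨_, rfl⟩
  have hpos : 0 < v.1 - u.1 := sub_pos.2 huv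
  have hl0 : 0 ≤ l := hl ▸ div_nonneg (sub_nonneg.2 huq) hpos.le
  have hl1 : 0 ≤ 1 - l := sub_nonneg.2 (hl ▸ (div_le_one hpos).2 (by linarith))
  have hlmul : l * (v.1 - u.1) = q.1 - u.1 := hl ▸ div_mul_cancel₀ _ hpos.ne'
  have hgap : c * chordGap u v q = c * q.2 + d + e * q.1 - l * (c * v.2 + d + e * v.1) -
      (1 - l) * (c * u.2 + d + e * u.1) := by
    rw [chordGap, ← hl]
    linear_combination e * hlmul
  rw [← abs_mul, hgap]
  calc _ ≤ |c * q.2 + d + e * q.1| + |l * (c * v.2 + d + e * v.1)| +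
        |(1 - l) * (c * u.2 + d + e * u.1)| :=
        (abs_sub _ _).trans (add_le_add_left (abs_sub _ _) _)
    _ ≤ Q + l * Q + (1 - l) * Q := by
        rw [abs_mul l, abs_mul (1 - l), abs_of_nonneg hl0, abs_of_nonneg hl1]
        gcongr
    _ = 2 * Q := by ring

section NodeSet

variable {k : ℕ}

/-- The phases whose Hasse derivatives of order `j ≥ 1` in the second variable are at most
`R * W ^ j` at each of the nodes `p i`, and whose values at the nodes differ from the value at `p 0`
by at most `R`. -/
def nodeSet (p : Fin (k + 1) → ℝ × ℝ) (W R : ℝ) : Set (Idx k → ℝ) :=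
  {x | (∀ i, ∀ j ≥ 1, |phaseDeriv x j (p i)| ≤ R * W ^ j) ∧
    ∀ i, |phaseDeriv x 0 (p i) - phaseDeriv x 0 (p 0)| ≤ R}

theorem sub_mem_nodeSet {p : Fin (k + 1) → ℝ × ℝ} {W R R' : ℝ} {x x' : Idx k → ℝ}
    (hx : x ∈ nodeSet p W R) (hx' : x' ∈ nodeSet p W R') : x - x' ∈ nodeSet p W (R + R') := by
  refine ⟨fun i j hj => ?_, fun i => ?_⟩
  · rw [phaseDeriv_sub, add_mul]
    exact (abs_sub _ _).trans (add_le_add (hx.1 i j hj) (hx'.1 i j hj))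
  · rw [phaseDeriv_sub, phaseDeriv_sub, sub_sub_sub_comm]
    exact (abs_sub _ _).trans (add_le_add (hx.2 i) (hx'.2 i))

theorem isClosed_setOf_mem_nodeSet (W R : ℝ) :
    IsClosed {q : (Idx k → ℝ) × (Fin (k + 1) → ℝ × ℝ) | q.1 ∈ nodeSet q.2 W R} := by
  have hcont : ∀ j i, Continuous fun q : (Idx k → ℝ) × (Fin (k + 1) → ℝ × ℝ) =>
      phaseDeriv q.1 j (q.2 i) := by
    intro j i
    unfold phaseDeriv
    fun_prop
  simp only [nodeSet, mem_ofPred_eq]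
  simp only [ofPred_and, ofPred_forall]
  exact (isClosed_iInter fun i => isClosed_iInter fun j => isClosed_iInter fun _ =>
      isClosed_le (hcont j i).abs continuous_const).inter
    (isClosed_iInter fun i => isClosed_le ((hcont 0 i).sub (hcont 0 0)).abs continuous_const)

theorem measurableSet_nodeSet (p : Fin (k + 1) → ℝ × ℝ) (W R : ℝ) :
    MeasurableSet (nodeSet p W R) :=
  ((isClosed_setOf_mem_nodeSet W R).preimage (Continuous.prodMk_left p)).measurableSet

variable {p : Fin (k + 1) → ℝ × ℝ} {W R : ℝ} {z : Idx k → ℝ} {γ : Idx k}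

theorem abs_coeff_mul_newtonPoly_le_of_mem_nodeSet (hz : ∀ γ' < γ, z γ' = 0)
    (hmem : (newtonMatrix fun i => (p i).1).mulVec z ∈ nodeSet p W R) :
    |z γ| * |(newtonPoly (fun i => (p i).1) γ.1.1).eval (p γ.1.1).1| ≤ R * W ^ (γ.1.2 : ℕ) := by
  rw [← abs_mul]
  rcases Nat.eq_zero_or_pos (γ.1.2 : ℕ) with hb | hb
  · rw [← phaseDeriv_zero_newtonMatrix_mulVec_node_sub hz hb, hb, pow_zero, mul_one]
    exact hmem.2 _
  · rw [← phaseDeriv_newtonMatrix_mulVec_node hz hb]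
    exact hmem.1 _ _ hb

theorem exists_newton_term_eq {t : Fin (k + 1) → ℝ} (hz : ∀ γ' < γ, z γ' = 0) {j : ℕ}
    (hj : (γ.1.2 : ℕ) = j + 1) (hγ : (γ.1.1 : ℕ) + γ.1.2 = k) (γ' : Idx k) :
    ∃ d e : ℝ, ∀ q : ℝ × ℝ, z γ' * ((newtonPoly t γ'.1.1).eval q.1 *
        ((γ'.1.2 : ℕ).choose j * q.2 ^ ((γ'.1.2 : ℕ) - j))) =
      (newtonPoly t γ.1.1).eval q.1 *
        ((if γ' = γ then (j + 1) * z γ * q.2 else 0) + d + e * q.1) := by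
  rcases lt_trichotomy γ' γ with hlt | rfl | hgt
  · exact ⟨0, 0, fun q => by simp [hz _ hlt, hlt.ne]⟩
  · refine ⟨0, 0, fun q => ?_⟩
    rw [if_pos rfl, hj, Nat.choose_succ_self_right, Nat.add_sub_cancel_left]
    push_cast
    ring
  simp only [hgt.ne', if_false]
  rcases lt_or_ge (γ'.1.2 : ℕ) j with hlow | hhigh
  · exact ⟨0, 0, fun q => by simp [Nat.choose_eq_zero_of_lt hlow]⟩
  have hγ' := γ'.2.2
  have hsnd : (γ'.1.2 : ℕ) = j := by
    rcases Idx.lt_iff.1 hgt with h | h <;> grind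
  rcases Idx.lt_iff.1 hgt with hfst | ⟨hfst, -⟩
  · refine ⟨-(z γ' * t γ.1.1), z γ', fun q => ?_⟩
    rw [newtonPoly_of_val_eq_add_one t (a := γ.1.1) (a' := γ'.1.1) (by grind)]
    simp [hsnd]
    ring
  · refine ⟨z γ', 0, fun q => ?_⟩
    simp [hsnd, hfst, mul_comm]

/-- For an extremal leading index `γ`, the derivative of order `γ.1.2 - 1` only sees the leading
coefficient and the coefficients of two neighbours, whose contribution is affine. -/
theorem exists_phaseDeriv_newtonMatrix_mulVec_eq (t : Fin (k + 1) → ℝ) (hz : ∀ γ' < γ, z γ' = 0)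
    {j : ℕ} (hj : (γ.1.2 : ℕ) = j + 1) (hj0 : 0 < j) (hγ : (γ.1.1 : ℕ) + γ.1.2 = k) :
    ∃ d e : ℝ, ∀ q : ℝ × ℝ, phaseDeriv ((newtonMatrix t).mulVec z) j q =
      (newtonPoly t γ.1.1).eval q.1 * ((j + 1) * z γ * q.2 + d + e * q.1) := by
  choose d e hde using exists_newton_term_eq (t := t) hz hj hγ
  refine ⟨∑ γ', d γ', ∑ γ', e γ', fun q => ?_⟩
  rw [phaseDeriv_newtonMatrix_mulVec_of_pos _ _ hj0, Finset.sum_congr rfl fun γ' _ => hde γ' q,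
    ← Finset.mul_sum, Finset.sum_add_distrib, Finset.sum_add_distrib, ← Finset.sum_mul,
    Finset.sum_ite_eq' Finset.univ γ, if_pos (Finset.mem_univ _)]

end NodeSet

variable {n : ℕ}

/-- The first coordinates of the nodes are `r`-separated, the lowest and the highest of them being
those of the last two nodes. -/
structure NodeConfig (r : ℝ) (p : Fin (n + 2) → ℝ × ℝ) : Prop where
  separated : Pairwise fun i l => r ≤ |(p i).1 - (p l).1|
  lowest_le : ∀ i, (p (Fin.last n).castSucc).1 ≤ (p i).1
  le_highest : ∀ i, (p i).1 ≤ (p (Fin.last (n + 1))).1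

/-- The chord gap of the node `i` with respect to the lowest and the highest node of a
configuration. -/
def nodeGap (p : Fin (n + 2) → ℝ × ℝ) (i : Fin n) : ℝ :=
  chordGap (p (Fin.last n).castSucc) (p (Fin.last (n + 1))) (p i.castSucc.castSucc)

namespace NodeConfig

variable {r : ℝ} {p : Fin (n + 2) → ℝ × ℝ} {W R : ℝ} {z : Idx (n + 1) → ℝ} {γ : Idx (n + 1)}

theorem lowest_lt_highest (hp : NodeConfig r p) (hr : 0 < r) :
    (p (Fin.last n).castSucc).1 < (p (Fin.last (n + 1))).1 :=
  (hp.le_highest _).lt_of_ne fun h => hr.not_ge <| by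
    simpa [h] using hp.separated (Fin.castSucc_lt_last (Fin.last n)).ne

theorem pow_le_abs_eval_newtonPoly (hp : NodeConfig r p) (hr : 0 ≤ r) {a i : Fin (n + 2)}
    (hai : a ≤ i) : r ^ (a : ℕ) ≤ |(newtonPoly (fun i => (p i).1) a).eval (p i).1| := by
  rw [eval_newtonPoly, Finset.abs_prod, ← Fin.card_Iio, ← Finset.prod_const]
  exact Finset.prod_le_prod (fun _ _ => hr) fun l hl =>
    hp.separated ((Finset.mem_Iio.1 hl).trans_le hai).ne'

theorem abs_coeff_le (hp : NodeConfig r p) (hr : 0 < r) (hz : ∀ γ' < γ, z γ' = 0)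
    (hmem : (newtonMatrix fun i => (p i).1).mulVec z ∈ nodeSet p W R) :
    |z γ| ≤ R * W ^ (γ.1.2 : ℕ) * r⁻¹ ^ (γ.1.1 : ℕ) := by
  rw [inv_pow, ← div_eq_mul_inv, le_div_iff₀ (pow_pos hr _)]
  exact (mul_le_mul_of_nonneg_left (hp.pow_le_abs_eval_newtonPoly hr.le le_rfl)
    (abs_nonneg _)).trans (abs_coeff_mul_newtonPoly_le_of_mem_nodeSet hz hmem)

theorem abs_coeff_mul_nodeGap_le (hp : NodeConfig r p) (hr : 0 < r) (hz : ∀ γ' < γ, z γ' = 0)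
    (hmem : (newtonMatrix fun i => (p i).1).mulVec z ∈ nodeSet p W R) {i : Fin n}
    (hi : γ.1.1 = i.castSucc.castSucc) (hγ : (γ.1.1 : ℕ) + γ.1.2 = n + 1) :
    |z γ| * |nodeGap p i| ≤ 2 * (R * W ^ ((γ.1.2 : ℕ) - 1) * r⁻¹ ^ (γ.1.1 : ℕ)) := by
  have hival : (γ.1.1 : ℕ) = i := congrArg Fin.val hi
  obtain ⟨j, hj⟩ : ∃ j, (γ.1.2 : ℕ) = j + 1 := ⟨γ.1.2 - 1, by omega⟩
  have hj0 : 0 < j := by omega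
  obtain ⟨d, e, hde⟩ := exists_phaseDeriv_newtonMatrix_mulVec_eq (fun i => (p i).1) hz hj hj0 hγ
  have hbound : ∀ l ≥ γ.1.1, |(j + 1) * z γ * (p l).2 + d + e * (p l).1| ≤
      R * W ^ j * r⁻¹ ^ (γ.1.1 : ℕ) := by
    intro l hl
    have h := hmem.1 l j hj0
    rw [hde, abs_mul] at h
    rw [inv_pow, ← div_eq_mul_inv, le_div_iff₀ (pow_pos hr _), mul_comm]
    exact (mul_le_mul_of_nonneg_right (hp.pow_le_abs_eval_newtonPoly hr.le hl)
      (abs_nonneg _)).trans h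
  have hlow : i.castSucc.castSucc ≤ (Fin.last n).castSucc :=
    Fin.castSucc_le_castSucc_iff.2 (Fin.le_last _)
  have hgap := abs_mul_abs_chordGap_le (q := p γ.1.1) (hp.lowest_lt_highest hr) (hp.lowest_le _)
    (hp.le_highest _) (hbound _ (hi.trans_le hlow)) (hbound _ (Fin.le_last _)) (hbound _ le_rfl)
  rw [hj, Nat.add_sub_cancel, nodeGap, ← hi]
  refine (mul_le_mul_of_nonneg_right ?_ (abs_nonneg _)).trans hgap
  rw [abs_mul, abs_of_pos (by positivity : (0 : ℝ) < j + 1)]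
  exact le_mul_of_one_le_left (abs_nonneg _) (by simp)

theorem abs_coeff_le_prod_inv (hp : NodeConfig r p) (hr : 0 < r) (hz : ∀ γ' < γ, z γ' = 0)
    (hmem : (newtonMatrix fun i => (p i).1).mulVec z ∈ nodeSet p W R)
    (hγ : γ.1.1 = Fin.last (n + 1)) :
    |z γ| ≤ R * ∏ l : Fin (n + 1), |(p (Fin.last (n + 1))).1 - (p l.castSucc).1|⁻¹ := by
  have hsnd : (γ.1.2 : ℕ) = 0 := by
    have hfst : (γ.1.1 : ℕ) = n + 1 := congrArg Fin.val hγ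
    have := γ.2.2
    omega
  have heval : |(newtonPoly (fun i => (p i).1) (Fin.last (n + 1))).eval
      (p (Fin.last (n + 1))).1| =
      ∏ l : Fin (n + 1), |(p (Fin.last (n + 1))).1 - (p l.castSucc).1| := by
    rw [eval_newtonPoly, Finset.abs_prod, Fin.Iio_last_eq_map, Finset.prod_map]
    rfl
  have hpos := (pow_pos hr _).trans_le
    (hp.pow_le_abs_eval_newtonPoly hr.le (le_refl (Fin.last (n + 1))))
  have h := abs_coeff_mul_newtonPoly_le_of_mem_nodeSet hz hmem
  rw [hγ, hsnd, pow_zero, mul_one] at h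
  rw [Finset.prod_inv_distrib, ← heval, ← div_eq_mul_inv, le_div_iff₀ hpos]
  exact h

end NodeConfig

/-- The factor gained over the bound `NodeConfig.abs_coeff_le` for the leading coefficient, when
its index `(a, b)` is extremal, that is, `a + b = n + 1`. -/
def extremalGain (p : Fin (n + 2) → ℝ × ℝ) (W r : ℝ) : Fin (n + 2) → ℝ :=
  Fin.snoc (α := fun _ => ℝ)
    (Fin.snoc (α := fun _ => ℝ) (fun i : Fin n => (1 + W * |nodeGap p i|)⁻¹) 1)
    (r ^ (n + 1) * ∏ l : Fin (n + 1), |(p (Fin.last (n + 1))).1 - (p l.castSucc).1|⁻¹)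

theorem extremalGain_nonneg (p : Fin (n + 2) → ℝ × ℝ) {W r : ℝ} (hW : 0 ≤ W) (hr : 0 ≤ r)
    (a : Fin (n + 2)) : 0 ≤ extremalGain p W r a := by
  unfold extremalGain
  induction a using Fin.lastCases with
  | last => simp only [Fin.snoc_last]; positivity
  | cast a =>
    simp only [Fin.snoc_castSucc]
    induction a using Fin.lastCases with
    | last => simp only [Fin.snoc_last]; positivity
    | cast i => simp only [Fin.snoc_castSucc]; positivity

theorem prod_extremalGain (p : Fin (n + 2) → ℝ × ℝ) (W r : ℝ) :
    ∏ a, extremalGain p W r a = (∏ i : Fin n, (1 + W * |nodeGap p i|)⁻¹) *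
      (r ^ (n + 1) * ∏ l : Fin (n + 1), |(p (Fin.last (n + 1))).1 - (p l.castSucc).1|⁻¹) := by
  simp only [extremalGain, Fin.prod_univ_castSucc (n := n + 1), Fin.prod_univ_castSucc (n := n),
    Fin.snoc_castSucc, Fin.snoc_last, mul_one]

namespace NodeConfig

variable {r : ℝ} {p : Fin (n + 2) → ℝ × ℝ} {W R : ℝ} {z : Idx (n + 1) → ℝ} {γ : Idx (n + 1)}

theorem abs_coeff_le_extremalGain (hp : NodeConfig r p) (hr : 0 < r) (hW : 0 ≤ W) (hR : 0 ≤ R)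
    (hz : ∀ γ' < γ, z γ' = 0)
    (hmem : (newtonMatrix fun i => (p i).1).mulVec z ∈ nodeSet p W R)
    (hγ : (γ.1.1 : ℕ) + γ.1.2 = n + 1) :
    |z γ| ≤ 3 * (R * W ^ (γ.1.2 : ℕ) * r⁻¹ ^ (γ.1.1 : ℕ)) * extremalGain p W r γ.1.1 := by
  have htriv := hp.abs_coeff_le hr hz hmem
  have hnonneg : 0 ≤ R * W ^ (γ.1.2 : ℕ) * r⁻¹ ^ (γ.1.1 : ℕ) := by positivity
  rcases Fin.eq_castSucc_or_eq_last γ.1.1 with ⟨a, ha⟩ | ha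
  · rcases Fin.eq_castSucc_or_eq_last a with ⟨i, rfl⟩ | rfl
    · have hgap := hp.abs_coeff_mul_nodeGap_le hr hz hmem ha hγ
      have hb : (γ.1.2 : ℕ) = (γ.1.2 : ℕ) - 1 + 1 := by
        have := congrArg Fin.val ha
        simp only [Fin.val_castSucc] at this
        omega
      have hWgap : W * (|z γ| * |nodeGap p i|) ≤
          2 * (R * W ^ (γ.1.2 : ℕ) * r⁻¹ ^ (γ.1.1 : ℕ)) := by
        refine (mul_le_mul_of_nonneg_left hgap hW).trans_eq ?_
        rw [hb, pow_succ, Nat.add_sub_cancel]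
        ring
      have hgain : extremalGain p W r γ.1.1 = (1 + W * |nodeGap p i|)⁻¹ := by
        rw [ha, extremalGain, Fin.snoc_castSucc, Fin.snoc_castSucc]
      rw [hgain, ← div_eq_mul_inv, le_div_iff₀ (by positivity)]
      linarith
    · have hgain : extremalGain p W r γ.1.1 = 1 := by
        rw [ha, extremalGain, Fin.snoc_castSucc, Fin.snoc_last]
      rw [hgain]
      linarith
  · have hgain : extremalGain p W r γ.1.1 =
        r ^ (n + 1) * ∏ l : Fin (n + 1), |(p (Fin.last (n + 1))).1 - (p l.castSucc).1|⁻¹ := by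
      rw [ha, extremalGain, Fin.snoc_last]
    have hfst : (γ.1.1 : ℕ) = n + 1 := congrArg Fin.val ha
    have hsnd : (γ.1.2 : ℕ) = 0 := by omega
    have htop := hp.abs_coeff_le_prod_inv hr hz hmem ha
    rw [hgain, hfst, hsnd, pow_zero, mul_one, inv_pow]
    calc |z γ| ≤ 3 * (R * ∏ l : Fin (n + 1),
          |(p (Fin.last (n + 1))).1 - (p l.castSucc).1|⁻¹) := by
          linarith [(abs_nonneg (z γ)).trans htop]
      _ = _ := by field_simp

theorem volume_nodeSet_le (hp : NodeConfig r p) (hr : 0 < r) (hW : 0 ≤ W) :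
    volume (nodeSet p W 1) ≤ ENNReal.ofReal
      (6 ^ Fintype.card (Idx (n + 1)) * (W * r⁻¹) ^ (∑ β : Idx (n + 1), (β.1.2 : ℕ)) *
        ((∏ i : Fin n, (1 + W * |nodeGap p i|)⁻¹) * (r ^ (n + 1) *
          ∏ l : Fin (n + 1), |(p (Fin.last (n + 1))).1 - (p l.castSucc).1|⁻¹))) := by
  have hdet : LinearMap.det (Matrix.toLin' (newtonMatrix fun i => (p i).1)) = 1 := by
    rw [LinearMap.det_toLin', det_newtonMatrix]
  have hvol : volume (nodeSet p W 1) =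
      volume (Matrix.toLin' (newtonMatrix fun i => (p i).1) ⁻¹' nodeSet p W 1) := by
    rw [Measure.addHaar_preimage_linearMap _ (by rw [hdet]; exact one_ne_zero), hdet]
    simp
  have hmeas : MeasurableSet
      (Matrix.toLin' (newtonMatrix fun i => (p i).1) ⁻¹' nodeSet p W 1) :=
    measurableSet_nodeSet p W 1 |>.preimage
      (LinearMap.continuous_of_finiteDimensional _).measurable
  rw [hvol, ← prod_extremalGain, ← Idx.prod_ite_add_eq (Nat.le_add_left 1 n), mul_pow]
  refine (volume_le_prod_of_triangular hmeas
    (fun γ => 6 * (W ^ (γ.1.2 : ℕ) * r⁻¹ ^ (γ.1.1 : ℕ)) *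
      if (γ.1.1 : ℕ) + γ.1.2 = n + 1 then extremalGain p W r γ.1.1 else 1)
    fun c hc c' hc' γ hcc' => ?_).trans_eq ?_
  · have hmem : (newtonMatrix fun i => (p i).1).mulVec (c - c') ∈ nodeSet p W (1 + 1) := by
      rw [Matrix.mulVec_sub]
      exact sub_mem_nodeSet hc hc'
    have hz : ∀ γ' < γ, (c - c') γ' = 0 := fun γ' h => sub_eq_zero.2 (hcc' γ' h)
    rw [← Pi.sub_apply]
    split_ifs with hγ
    · exact (hp.abs_coeff_le_extremalGain hr hW (by norm_num) hz hmem hγ).trans_eq (by ring)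
    · have : 0 ≤ W ^ (γ.1.2 : ℕ) * r⁻¹ ^ (γ.1.1 : ℕ) := by positivity
      linarith [hp.abs_coeff_le hr hz hmem]
  · rw [← ENNReal.ofReal_prod_of_nonneg fun γ _ => mul_nonneg (by positivity) (by
      split_ifs
      exacts [extremalGain_nonneg p hW hr.le _, zero_le_one]), Finset.prod_mul_distrib,
      Finset.prod_mul_distrib, Finset.prod_mul_distrib, Finset.prod_const,
      Finset.prod_pow_eq_pow_sum, Finset.prod_pow_eq_pow_sum, Idx.sum_fst_eq_sum_snd,
      Finset.card_univ]

end NodeConfig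

end NodeConfigurations

section NodeIntegral

variable {n : ℕ}

/-- The configurations of `r`-separated nodes in the unit square. -/
def goodNodes (r : ℝ) : Set (Fin (n + 2) → ℝ × ℝ) :=
  {p | (∀ i, p i ∈ Icc (0 : ℝ) 1 ×ˢ Icc (0 : ℝ) 1) ∧ NodeConfig r p}

theorem measurableSet_goodNodes (r : ℝ) : MeasurableSet (goodNodes (n := n) r) := by
  have hclosed : IsClosed ((⋂ i, {p : Fin (n + 2) → ℝ × ℝ | p i ∈ Icc (0 : ℝ) 1 ×ˢ Icc (0 : ℝ) 1}) ∩
      ((⋂ i, ⋂ l, ⋂ (_ : i ≠ l), {p | r ≤ |(p i).1 - (p l).1|}) ∩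
      ((⋂ i, {p | (p (Fin.last n).castSucc).1 ≤ (p i).1}) ∩
        ⋂ i, {p | (p i).1 ≤ (p (Fin.last (n + 1))).1}))) := by
    refine (isClosed_iInter fun i =>
      (isClosed_Icc.prod isClosed_Icc).preimage (continuous_apply i)).inter
      ((isClosed_iInter fun i => isClosed_iInter fun l => isClosed_iInter fun _ => ?_).inter
      ((isClosed_iInter fun i => ?_).inter (isClosed_iInter fun i => ?_)))
    all_goals exact isClosed_le (by fun_prop) (by fun_prop)
  convert hclosed.measurableSet using 1
  ext p
  simp only [goodNodes, mem_inter_iff, mem_iInter, mem_ofPred_eq]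
  exact and_congr_right fun _ =>
    ⟨fun h => ⟨fun _ _ hne => h.separated hne, h.lowest_le, h.le_highest⟩,
      fun h => ⟨fun _ _ hne => h.1 _ _ hne, h.2.1, h.2.2⟩⟩

theorem abs_chordGap_le_one {u v q : ℝ × ℝ} (huq : u.1 ≤ q.1) (hqv : q.1 ≤ v.1)
    (hu : u.2 ∈ Icc (0 : ℝ) 1) (hv : v.2 ∈ Icc (0 : ℝ) 1) (hq : q.2 ∈ Icc (0 : ℝ) 1) :
    |chordGap u v q| ≤ 1 := by
  have hl : (q.1 - u.1) / (v.1 - u.1) ∈ Icc (0 : ℝ) 1 :=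
    ⟨div_nonneg (by linarith) (by linarith), div_le_one_of_le₀ (by linarith) (by linarith)⟩
  have hchord : u.2 + (q.1 - u.1) / (v.1 - u.1) * (v.2 - u.2) ∈ Icc (0 : ℝ) 1 :=
    (convex_Icc 0 1).add_smul_sub_mem hu hv hl
  rw [chordGap, abs_le]
  constructor <;> linarith [hq.1, hq.2, hchord.1, hchord.2]

theorem lintegral_mul_shear {φ h : ℝ → ℝ≥0∞} (hφ : Measurable φ) (hh : Measurable h) (c : ℝ)
    {s : ℝ → ℝ} (hs : Measurable s) :
    ∫⁻ a : ℝ × ℝ, φ (a.1 - c) * h (a.2 - s a.1) = (∫⁻ u, φ u) * ∫⁻ u, h u := by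
  rw [Measure.volume_eq_prod, lintegral_prod _ (by fun_prop)]
  have hinner : ∀ a : ℝ, ∫⁻ b : ℝ, φ (a - c) * h (b - s a) = φ (a - c) * ∫⁻ u, h u := by
    intro a
    rw [lintegral_const_mul _ (by fun_prop), lintegral_sub_right_eq_self]
  simp_rw [hinner]
  rw [lintegral_mul_const _ (by fun_prop), lintegral_sub_right_eq_self φ c]

/-- The factor attached to each node in the integration over configurations: a Riesz kernel in
the distance to the highest node, and a kernel in the chord gap for all but the last two nodes. -/
def nodeFactor (e W : ℝ) : Fin (n + 2) → (Fin (n + 2) → ℝ × ℝ) → ℝ≥0∞ :=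
  Fin.snoc (α := fun _ => (Fin (n + 2) → ℝ × ℝ) → ℝ≥0∞)
    (Fin.snoc (α := fun _ => (Fin (n + 2) → ℝ × ℝ) → ℝ≥0∞)
      (fun i p => rieszKernel e ((p i.castSucc.castSucc).1 - (p (Fin.last (n + 1))).1) *
        gapKernel W (nodeGap p i))
      fun p => rieszKernel e ((p (Fin.last n).castSucc).1 - (p (Fin.last (n + 1))).1) *
        (Icc (0 : ℝ) 1).indicator 1 (p (Fin.last n).castSucc).2)
    fun p => (Icc (0 : ℝ) 1 ×ˢ Icc (0 : ℝ) 1).indicator 1 (p (Fin.last (n + 1)))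

theorem measurable_nodeFactor (e W : ℝ) (i : Fin (n + 2)) : Measurable (nodeFactor e W i) := by
  have hind := measurable_one.indicator (f := (1 : ℝ → ℝ≥0∞)) (measurableSet_Icc (a := 0) (b := 1))
  unfold nodeFactor
  induction i using Fin.lastCases with
  | last =>
    simp only [Fin.snoc_last]
    exact (measurable_one.indicator (measurableSet_Icc.prod measurableSet_Icc)).comp
      (measurable_pi_apply _)
  | cast i =>
    simp only [Fin.snoc_castSucc]
    induction i using Fin.lastCases with
    | last =>
      simp only [Fin.snoc_last]
      fun_prop
    | cast i =>
      simp only [Fin.snoc_castSucc, nodeGap, chordGap]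
      fun_prop

theorem nodeFactor_congr (e W : ℝ) (i : Fin (n + 2)) (p q : Fin (n + 2) → ℝ × ℝ)
    (h : ∀ j, i ≤ j → p j = q j) : nodeFactor e W i p = nodeFactor e W i q := by
  unfold nodeFactor
  have hlast := h _ (Fin.le_last i)
  induction i using Fin.lastCases with
  | last => simp only [Fin.snoc_last, hlast]
  | cast i =>
    have hlow := h _ (Fin.castSucc_le_castSucc_iff.2 (Fin.le_last i))
    simp only [Fin.snoc_castSucc]
    induction i using Fin.lastCases with
    | last => simp only [Fin.snoc_last, hlow, hlast]
    | cast i => simp only [Fin.snoc_castSucc, nodeGap, hlow, hlast, h _ le_rfl]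

theorem lintegral_nodeFactor_update_le (e : ℝ) {W : ℝ} (hW : 0 < W) (i : Fin (n + 2))
    (p : Fin (n + 2) → ℝ × ℝ) :
    ∫⁻ a, nodeFactor e W i (Function.update p i a) ≤
      Fin.snoc (α := fun _ => ℝ≥0∞) (Fin.snoc (α := fun _ => ℝ≥0∞)
        (fun _ : Fin n => (∫⁻ u, rieszKernel e u) * ENNReal.ofReal (2 * log (1 + W) / W))
        (∫⁻ u, rieszKernel e u)) 1 i := by
  unfold nodeFactor
  induction i using Fin.lastCases with
  | last =>
    simp only [Fin.snoc_last, Function.update_self]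
    rw [lintegral_indicator_one (measurableSet_Icc.prod measurableSet_Icc),
      Measure.volume_eq_prod, Measure.prod_prod]
    simp
  | cast i =>
    simp only [Fin.snoc_castSucc]
    induction i using Fin.lastCases with
    | last =>
      have hshear := lintegral_mul_shear (measurable_rieszKernel e)
        (measurable_one.indicator (f := 1) (measurableSet_Icc (a := (0 : ℝ)) (b := 1)))
        (p (Fin.last (n + 1))).1 (s := 0) measurable_zero
      simp only [Pi.zero_apply, sub_zero] at hshear
      simp only [Fin.snoc_last, Function.update_self,
        Function.update_of_ne (Fin.castSucc_lt_last (Fin.last n)).ne']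
      rw [hshear, lintegral_indicator_one measurableSet_Icc]
      simp
    | cast i =>
      simp only [Fin.snoc_castSucc, nodeGap, chordGap, Function.update_self,
        Function.update_of_ne (Fin.castSucc_lt_last i.castSucc).ne',
        Function.update_of_ne (Fin.castSucc_lt_castSucc_iff.2 (Fin.castSucc_lt_last i)).ne']
      rw [lintegral_mul_shear (s := fun u => _ + (u - _) / _ * _) (measurable_rieszKernel e)
        (measurable_gapKernel W) _ (by fun_prop)]
      gcongr
      exact lintegral_gapKernel_le hW

theorem lintegral_prod_nodeFactor_le (e : ℝ) {W : ℝ} (hW : 0 < W) :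
    ∫⁻ p : Fin (n + 2) → ℝ × ℝ, ∏ i, nodeFactor e W i p ≤
      ENNReal.ofReal (2 * log (1 + W) / W) ^ n * (∫⁻ u, rieszKernel e u) ^ (n + 1) := by
  refine (lintegral_prod_le_of_triangular _ (measurable_nodeFactor e W) (nodeFactor_congr e W)
    (lintegral_nodeFactor_update_le e hW)).trans_eq ?_
  simp only [Fin.prod_univ_castSucc, Fin.snoc_castSucc, Fin.snoc_last, Finset.prod_const,
    Finset.card_univ, Fintype.card_fin]
  ring

theorem prod_nodeFactor_of_mem {r : ℝ} {p : Fin (n + 2) → ℝ × ℝ} (hp : p ∈ goodNodes r)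
    (e : ℝ) {W : ℝ} (hW : 0 ≤ W) :
    ∏ i, nodeFactor e W i p = ENNReal.ofReal ((∏ i : Fin n, (1 + W * |nodeGap p i|)⁻¹) *
      ∏ l : Fin (n + 1), |(p (Fin.last (n + 1))).1 - (p l.castSucc).1| ^ (-e)) := by
  have hriesz : ∀ i l, rieszKernel e ((p i).1 - (p l).1) =
      ENNReal.ofReal (|(p l).1 - (p i).1| ^ (-e)) := by
    intro i l
    rw [rieszKernel, indicator_of_mem, abs_sub_comm]
    constructor <;> linarith [(hp.1 i).1.1, (hp.1 i).1.2, (hp.1 l).1.1, (hp.1 l).1.2]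
  have hgap : ∀ i, gapKernel W (nodeGap p i) = ENNReal.ofReal (1 + W * |nodeGap p i|)⁻¹ := by
    intro i
    have hmem : nodeGap p i ∈ Icc (-1 : ℝ) 1 := abs_le.1 <| abs_chordGap_le_one
      (hp.2.lowest_le _) (hp.2.le_highest _) (hp.1 _).2 (hp.1 _).2 (hp.1 _).2
    rw [gapKernel, indicator_of_mem hmem]
  rw [ENNReal.ofReal_mul (by positivity),
    ENNReal.ofReal_prod_of_nonneg fun _ _ => by positivity,
    ENNReal.ofReal_prod_of_nonneg fun _ _ => by positivity]
  simp only [nodeFactor, Fin.prod_univ_castSucc, Fin.snoc_castSucc, Fin.snoc_last, hriesz, hgap,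
    indicator_of_mem (hp.1 _).2, indicator_of_mem (hp.1 _), Pi.one_apply, mul_one,
    Finset.prod_mul_distrib]
  ring

theorem volume_nodeSet_le_mul_prod_nodeFactor {r : ℝ} {p : Fin (n + 2) → ℝ × ℝ}
    (hp : p ∈ goodNodes r) (hr : 0 < r) {e : ℝ} (he : e ≤ 1) {W : ℝ} (hW : 0 ≤ W) :
    volume (nodeSet p W 1) ≤ ENNReal.ofReal
      (6 ^ Fintype.card (Idx (n + 1)) * (W * r⁻¹) ^ (∑ β : Idx (n + 1), (β.1.2 : ℕ)) *
        (r ^ e) ^ (n + 1)) * ∏ i, nodeFactor e W i p := by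
  have hprod : r ^ (n + 1) *
        ∏ l : Fin (n + 1), |(p (Fin.last (n + 1))).1 - (p l.castSucc).1|⁻¹ ≤
      (r ^ e) ^ (n + 1) *
        ∏ l : Fin (n + 1), |(p (Fin.last (n + 1))).1 - (p l.castSucc).1| ^ (-e) := by
    simp only [← Fin.prod_const, ← Finset.prod_mul_distrib]
    refine Finset.prod_le_prod (fun l _ => by positivity) fun l _ => ?_
    have hsep : r ≤ |(p (Fin.last (n + 1))).1 - (p l.castSucc).1| :=
      hp.2.separated (Fin.castSucc_lt_last l).ne'
    have hpos := hr.trans_le hsep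
    rw [rpow_neg hpos.le, ← div_eq_mul_inv, ← div_eq_mul_inv, ← div_rpow hr.le hpos.le]
    exact self_le_rpow_of_le_one (by positivity) ((div_le_one hpos).2 hsep) he
  rw [prod_nodeFactor_of_mem hp e hW, ← ENNReal.ofReal_mul (by positivity)]
  refine (hp.2.volume_nodeSet_le hr hW).trans (ENNReal.ofReal_le_ofReal ?_)
  rw [mul_assoc (_ * _), mul_left_comm ((r ^ e) ^ (n + 1))]
  gcongr

theorem lintegral_volume_nodeSet_le {r : ℝ} (hr : 0 < r) {e : ℝ} (he : e ≤ 1) {W : ℝ}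
    (hW : 0 < W) :
    ∫⁻ p in goodNodes (n := n) r, volume (nodeSet p W 1) ≤ ENNReal.ofReal
      (6 ^ Fintype.card (Idx (n + 1)) * (W * r⁻¹) ^ (∑ β : Idx (n + 1), (β.1.2 : ℕ)) *
        (r ^ e) ^ (n + 1)) *
      (ENNReal.ofReal (2 * log (1 + W) / W) ^ n * (∫⁻ u, rieszKernel e u) ^ (n + 1)) := by
  refine (setLIntegral_mono' (measurableSet_goodNodes r) fun p hp =>
    volume_nodeSet_le_mul_prod_nodeFactor hp hr he hW.le).trans ?_
  rw [lintegral_const_mul' _ _ ENNReal.ofReal_ne_top]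
  gcongr
  exact (setLIntegral_le_lintegral _ _).trans (lintegral_prod_nodeFactor_le e hW)

end NodeIntegral

section LevelSlices

variable {k : ℕ}

/-- The phase with the first coordinate fixed at `s`, as a polynomial in the second coordinate. -/
def slicePoly (x : Idx k → ℝ) (s : ℝ) : Polynomial ℝ :=
  ∑ β : Idx k, Polynomial.monomial (β.1.2 : ℕ) (x β * s ^ (β.1.1 : ℕ))

theorem natDegree_slicePoly_le (x : Idx k → ℝ) (s : ℝ) : (slicePoly x s).natDegree ≤ k :=
  Polynomial.natDegree_sum_le_of_forall_le _ _ fun β _ =>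
    (Polynomial.natDegree_monomial_le _).trans (by have := β.2; omega)

theorem eval_hasseDeriv_slicePoly (x : Idx k → ℝ) (j : ℕ) (s y : ℝ) :
    (Polynomial.hasseDeriv j (slicePoly x s)).eval y = phaseDeriv x j (s, y) := by
  rw [slicePoly, map_sum, Polynomial.eval_finsetSum, phaseDeriv]
  refine Finset.sum_congr rfl fun β _ => ?_
  rw [Polynomial.hasseDeriv_monomial, Polynomial.eval_monomial]
  ring

theorem continuous_phaseDeriv (x : Idx k → ℝ) (j : ℕ) : Continuous (phaseDeriv x j) := by
  unfold phaseDeriv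
  fun_prop

theorem Pphase_eq_phaseDeriv_zero (x : Idx k → ℝ) (ξ : Fin 2 → ℝ) :
    Pphase k x ξ = phaseDeriv x 0 (ξ 0, ξ 1) := by
  simp [Pphase, phaseDeriv, mul_assoc]

/-- The part of the vertical slice of the unit square at `s` on which the phase takes values in
`[μ, μ + 1]`. -/
def levelSlice (x : Idx k → ℝ) (μ s : ℝ) : Set ℝ :=
  {y ∈ Icc (0 : ℝ) 1 | phaseDeriv x 0 (s, y) ∈ Icc μ (μ + 1)}

theorem measurableSet_setOf_mem_levelSlice (x : Idx k → ℝ) (μ : ℝ) :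
    MeasurableSet {q : ℝ × ℝ | q.2 ∈ levelSlice x μ q.1} :=
  ((isClosed_Icc.preimage continuous_snd).inter
    (isClosed_Icc.preimage (continuous_phaseDeriv x 0))).measurableSet

theorem measurable_volume_levelSlice (x : Idx k → ℝ) (μ : ℝ) :
    Measurable fun s => volume (levelSlice x μ s) :=
  measurable_measure_prodMk_left (measurableSet_setOf_mem_levelSlice x μ)

theorem volume_levelSlice_le_one (x : Idx k → ℝ) (μ s : ℝ) : volume (levelSlice x μ s) ≤ 1 :=
  (measure_mono (sep_subset _ _)).trans_eq (by simp)

theorem volume_level_eq_lintegral_levelSlice (x : Idx k → ℝ) (μ : ℝ) :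
    volume {ξ ∈ Icc (0 : Fin 2 → ℝ) 1 | μ ≤ Pphase k x ξ ∧ Pphase k x ξ ≤ μ + 1} =
      ∫⁻ t in Icc (0 : ℝ) 1, volume (levelSlice x μ t) := by
  have hE := measurableSet_setOf_mem_levelSlice x μ
  have hpreimage : {ξ ∈ Icc (0 : Fin 2 → ℝ) 1 | μ ≤ Pphase k x ξ ∧ Pphase k x ξ ≤ μ + 1} =
      MeasurableEquiv.finTwoArrow ⁻¹'
        ({q : ℝ × ℝ | q.2 ∈ levelSlice x μ q.1} ∩ Icc 0 1 ×ˢ univ) := by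
    ext ξ
    simp only [mem_ofPred_eq, mem_preimage, mem_inter_iff, mem_prod, mem_univ, levelSlice,
      Pphase_eq_phaseDeriv_zero, mem_Icc, Pi.le_def, Fin.forall_fin_two,
      MeasurableEquiv.finTwoArrow_apply, Pi.zero_apply, Pi.one_apply]
    tauto
  rw [hpreimage, (volume_preserving_finTwoArrow ℝ).measure_preimage
    (hE.inter (measurableSet_Icc.prod .univ)).nullMeasurableSet, ← Measure.restrict_apply hE,
    Measure.volume_eq_prod, ← Measure.prod_restrict, Measure.restrict_univ, Measure.prod_apply hE]
  rfl

/-- The phases for which, at some level `[μ, μ + 1]`, at least measure `v` of the vertical slices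
meet the level set in measure at least `w`. -/
def sliceSet (k : ℕ) (w v : ℝ) : Set (Idx k → ℝ) :=
  {x | ∃ μ : ℝ, ENNReal.ofReal v ≤
    volume {t ∈ Icc (0 : ℝ) 1 | ENNReal.ofReal w ≤ volume (levelSlice x μ t)}}

theorem exists_Lset_subset_iUnion_sliceSet {ε : ℝ} (hε : 0 < ε) (k : ℕ) : ∃ c : ℝ, 0 < c ∧
    ∀ δ : ℝ, 0 < δ → ∀ m : ℕ, 2 ≤ δ * 2 ^ m → δ * 2 ^ m ≤ 4 →
      Lset k δ ⊆ ⋃ j ∈ Finset.range (m + 1),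
        sliceSet k (2⁻¹ ^ j) (c * (δ * 2 ^ j) ^ (1 + ε)) := by
  obtain ⟨c, hc, hlevel⟩ := exists_dyadic_level hε
  refine ⟨c, hc, fun δ hδ m hm2 hm4 x hx => ?_⟩
  obtain ⟨μ, hμ⟩ := lt_iSup_iff.1 (mem_ofPred_eq ▸ hx)
  rw [volume_level_eq_lintegral_levelSlice] at hμ
  have : IsProbabilityMeasure (volume.restrict (Icc (0 : ℝ) 1)) := ⟨by simp⟩
  have hmeas := measurable_volume_levelSlice x μ
  obtain ⟨j, hj, hvol⟩ := hlevel _ _ hmeas (volume_levelSlice_le_one x μ) δ hδ hμ m hm2 hm4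
  rw [Measure.restrict_apply (measurableSet_le measurable_const hmeas), inter_comm] at hvol
  exact mem_iUnion₂.2 ⟨j, Finset.mem_range_succ_iff.2 hj, μ, hvol⟩

end LevelSlices

section ControlledConfigurations

/-- The points of the unit strip `ℝ × [0, 1]` at level `[μ, μ + 1]` where, for every `j ≥ 1`, the
`j`-th vertical Hasse derivative of the phase is at most `W ^ j`. -/
def controlledSet {k : ℕ} (x : Idx k → ℝ) (μ W : ℝ) : Set (ℝ × ℝ) :=
  {q | q.2 ∈ levelSlice x μ q.1 ∧ ∀ j, 1 ≤ j → |phaseDeriv x j q| ≤ W ^ j}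

theorem measurableSet_controlledSet {k : ℕ} (x : Idx k → ℝ) (μ W : ℝ) :
    MeasurableSet (controlledSet x μ W) := by
  refine (measurableSet_setOf_mem_levelSlice x μ).inter (IsClosed.measurableSet ?_)
  change IsClosed {q | ∀ j, 1 ≤ j → |phaseDeriv x j q| ≤ W ^ j}
  simp only [ofPred_forall]
  exact isClosed_iInter fun j => isClosed_iInter fun _ =>
    isClosed_le (continuous_phaseDeriv x j).abs continuous_const

theorem exists_le_volume_slice_controlledSet (k : ℕ) : ∃ C : ℝ, 1 ≤ C ∧
    ∀ (x : Idx k → ℝ) (μ w : ℝ), 0 < w → ∀ t, ENNReal.ofReal w ≤ volume (levelSlice x μ t) →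
      ENNReal.ofReal (w / 2) ≤ volume (Prod.mk t ⁻¹' controlledSet x μ (C / w)) := by
  obtain ⟨C, hC1, hC⟩ := exists_hasseDeriv_bound_on_half k
  refine ⟨C, hC1, fun x μ w hw t ht => ?_⟩
  have hlevel : ∀ y ∈ levelSlice x μ t, (slicePoly x t).eval y ∈ Icc μ (μ + 1) := by
    intro y hy
    rw [← Polynomial.hasseDeriv_zero' (slicePoly x t), eval_hasseDeriv_slicePoly]
    exact hy.2
  have hhalf := hC _ (natDegree_slicePoly_le x t) μ w hw _ hlevel ht
  simp only [eval_hasseDeriv_slicePoly] at hhalf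
  exact hhalf

theorem mem_nodeSet_of_forall_mem_controlledSet {k : ℕ} {x : Idx k → ℝ} {μ W : ℝ}
    {p : Fin (k + 1) → ℝ × ℝ} (hp : ∀ i, p i ∈ controlledSet x μ W) : x ∈ nodeSet p W 1 := by
  refine ⟨fun i j hj => (one_mul (W ^ j)).symm ▸ (hp i).2 j hj, fun i => abs_sub_le_iff.2 ?_⟩
  obtain ⟨⟨_, hi⟩, _⟩ := hp i
  obtain ⟨⟨_, h0⟩, _⟩ := hp 0
  constructor <;> linarith [hi.1, hi.2, h0.1, h0.2]

/- The blocks increase from left to right, so the swap sends the distinguished lowest node to the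
leftmost block. -/
theorem nodeConfig_of_mem_blocks {n : ℕ} {r : ℝ} (hr : 0 ≤ r) {B : Fin (n + 2) → Set ℝ}
    (hB : ∀ i j, i < j → ∀ s ∈ B i, ∀ t ∈ B j, s + r ≤ t) {p : Fin (n + 2) → ℝ × ℝ}
    (hp : ∀ i, (p i).1 ∈ B (Equiv.swap 0 (Fin.last n).castSucc i)) : NodeConfig r p := by
  set σ := Equiv.swap 0 (Fin.last n).castSucc
  have hlt {i l} (h : σ i < σ l) : (p i).1 + r ≤ (p l).1 := hB _ _ h _ (hp i) _ (hp l)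
  have hle {i l} (h : σ i ≤ σ l) : (p i).1 ≤ (p l).1 := by
    rcases h.eq_or_lt with h | h
    · rw [σ.injective h]
    · linarith [hlt h]
  have hlowest : σ (Fin.last n).castSucc = 0 := Equiv.swap_apply_right _ _
  have hhighest : σ (Fin.last (n + 1)) = Fin.last (n + 1) :=
    Equiv.swap_apply_of_ne_of_ne (Fin.last_pos).ne' (Fin.castSucc_lt_last _).ne'
  refine ⟨fun i l hil => ?_, fun i => hle (hlowest.trans_le (Fin.zero_le _)),
    fun i => hle ((Fin.le_last _).trans_eq hhighest.symm)⟩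
  refine le_abs.2 ?_
  rcases (σ.injective.ne hil).lt_or_gt with h | h
  · right; linarith [hlt h]
  · left; linarith [hlt h]

theorem exists_le_volume_goodNodes (n : ℕ) : ∃ C : ℝ, 1 ≤ C ∧ ∀ w v : ℝ, 0 < w → 0 < v →
    ∀ x ∈ sliceSet (n + 1) w v,
      ENNReal.ofReal (v / (2 * (n + 2 : ℕ)) * (w / 2)) ^ (n + 2) ≤
        volume {p ∈ goodNodes (v / (2 * (n + 2 : ℕ))) | x ∈ nodeSet p (C / w) 1} := by
  obtain ⟨C, hC1, hC⟩ := exists_le_volume_slice_controlledSet (n + 1)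
  refine ⟨C, hC1, fun w v hw hv x ⟨μ, hx⟩ => ?_⟩
  have hr : 0 ≤ v / (2 * (n + 2 : ℕ)) := by positivity
  have hT : MeasurableSet {t ∈ Icc (0 : ℝ) 1 | ENNReal.ofReal w ≤ volume (levelSlice x μ t)} :=
    measurableSet_Icc.inter
      (measurableSet_le measurable_const (measurable_volume_levelSlice x μ))
  obtain ⟨B, hBm, hBT, hBv, hBsep⟩ :=
    exists_separated_blocks hT (sep_subset _ _) hv hx (n + 2)
  have hQ : ∀ i, ENNReal.ofReal (v / (2 * (n + 2 : ℕ)) * (w / 2)) ≤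
      volume (Prod.fst ⁻¹' B i ∩ controlledSet x μ (C / w)) := by
    intro i
    rw [mul_comm, ENNReal.ofReal_mul (by positivity)]
    refine (mul_le_mul_right (hBv i) _).trans ?_
    exact mul_measure_le_prod_inter (measurableSet_controlledSet x μ _) (hBm i)
      fun t ht => hC x μ w hw t (hBT i ht).2
  set σ := Equiv.swap 0 (Fin.last n).castSucc
  calc ENNReal.ofReal (v / (2 * (n + 2 : ℕ)) * (w / 2)) ^ (n + 2)
      = ∏ _i : Fin (n + 2), ENNReal.ofReal (v / (2 * (n + 2 : ℕ)) * (w / 2)) := by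
        rw [Fin.prod_const]
    _ ≤ ∏ i, volume (Prod.fst ⁻¹' B (σ i) ∩ controlledSet x μ (C / w)) :=
        Finset.prod_le_prod' fun i _ => hQ _
    _ = volume (univ.pi fun i => Prod.fst ⁻¹' B (σ i) ∩ controlledSet x μ (C / w)) :=
        (volume_pi_pi _).symm
    _ ≤ _ := by
        refine measure_mono fun p hp => ⟨⟨fun i => ?_, ?_⟩, ?_⟩
        · exact ⟨(hBT _ (hp i trivial).1).1, (hp i trivial).2.1.1⟩
        · exact nodeConfig_of_mem_blocks hr hBsep fun i => (hp i trivial).1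
        · exact mem_nodeSet_of_forall_mem_controlledSet fun i => (hp i trivial).2

end ControlledConfigurations

section LevelSetVolume

/-- The exponent `q_k = k(k+1)(k+2)/6 + 2` of `1/δ` in the volume of `Lset k δ`. -/
def levelExponent (k : ℕ) : ℝ := (k : ℝ) * (k + 1) * (k + 2) / 6 + 2

theorem levelExponent_eq_sum_snd_add_two (k : ℕ) :
    levelExponent k = ((∑ β : Idx k, (β.1.2 : ℕ) : ℕ) : ℝ) + 2 := by
  have hsum : (6 : ℝ) * (∑ β : Idx k, (β.1.2 : ℕ) : ℕ) = k * (k + 1) * (k + 2) :=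
    mod_cast Idx.six_mul_sum_snd k
  rw [levelExponent]
  linarith

theorem two_le_levelExponent (k : ℕ) : 2 ≤ levelExponent k := by
  rw [levelExponent_eq_sum_snd_add_two]
  linarith [Nat.cast_nonneg (α := ℝ) (∑ β : Idx k, (β.1.2 : ℕ))]

theorem mul_volume_le_of_forall_le_volume_goodNodes {n : ℕ} {r : ℝ} (hr : 0 < r) {e : ℝ}
    (he : e ≤ 1) {W : ℝ} (hW : 0 < W) {c : ℝ≥0∞} {L : Set (Idx (n + 1) → ℝ)}
    (hL : ∀ x ∈ L, c ≤ volume {p ∈ goodNodes r | x ∈ nodeSet p W 1}) :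
    c * volume L ≤ ENNReal.ofReal
      (6 ^ Fintype.card (Idx (n + 1)) * (W * r⁻¹) ^ (∑ β : Idx (n + 1), (β.1.2 : ℕ)) *
        (r ^ e) ^ (n + 1)) *
      (ENNReal.ofReal (2 * log (1 + W) / W) ^ n * (∫⁻ u, rieszKernel e u) ^ (n + 1)) := by
  have hE := (isClosed_setOf_mem_nodeSet (k := n + 1) W 1).measurableSet
  refine (mul_measure_le_lintegral_measure_slice (ν := volume.restrict (goodNodes r)) hE
    fun x hx => ?_).trans (lintegral_volume_nodeSet_le hr he hW)
  rw [Measure.restrict_apply (measurable_prodMk_left hE), inter_comm]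
  exact hL x hx

/- With `e = 1 - 1 / (2 (n + 1))`, the separation `r` enters with the power `-(S + 3/2)`, half a
power better than the `-(S + 2)` carried by the slice measure `w`. -/
theorem separation_power_eq {r : ℝ} (hr : 0 < r) (n S : ℕ) :
    r⁻¹ ^ S * (r ^ (1 - 1 / (2 * (n + 1)) : ℝ)) ^ (n + 1) =
      r ^ (-(S + 3 / 2) : ℝ) * r ^ (n + 2) := by
  rw [← rpow_natCast r (n + 2), ← rpow_natCast r⁻¹, inv_rpow hr.le, ← rpow_neg hr.le,
    ← rpow_mul_natCast hr.le, ← rpow_add hr, ← rpow_add hr]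
  congr 1
  push_cast
  field_simp
  ring

theorem configuration_bound_eq {Z C A L w v q : ℝ} {n S : ℕ} (hC : 0 < C) (hw : 0 < w)
    (hv : 0 < v) (hq : q = S + 2) :
    Z * (C / w * (v / (2 * (n + 2 : ℕ)))⁻¹) ^ S *
        ((v / (2 * (n + 2 : ℕ))) ^ (1 - 1 / (2 * (n + 1)) : ℝ)) ^ (n + 1) *
        ((2 * L / (C / w)) ^ n * A ^ (n + 1)) =
      (v / (2 * (n + 2 : ℕ)) * (w / 2)) ^ (n + 2) *
        (Z * A ^ (n + 1) * 2 ^ n * 2 ^ (n + 2) * (C ^ S / C ^ n) *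
          (2 * (n + 2 : ℕ)) ^ (q - 1 / 2) * L ^ n * w ^ (-q) * v ^ (-(q - 1 / 2))) := by
  have hr : 0 < v / (2 * (n + 2 : ℕ)) := by positivity
  have hrv : (v / (2 * (n + 2 : ℕ))) ^ (-(S + 3 / 2) : ℝ) =
      (2 * (n + 2 : ℕ)) ^ (q - 1 / 2) * v ^ (-(q - 1 / 2)) := by
    have hexp : (S + 3 / 2 : ℝ) = q - 1 / 2 := by rw [hq]; ring
    rw [hexp, div_rpow hv.le (by positivity),
      rpow_neg (by positivity : (0 : ℝ) ≤ 2 * (n + 2 : ℕ)), div_inv_eq_mul, mul_comm]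
  have hwq : w ^ (-q) = (w ^ (S + 2))⁻¹ := by
    rw [hq, rpow_neg hw.le]
    exact_mod_cast rfl
  rw [mul_pow (C / w), ← mul_assoc Z, mul_assoc (Z * _), separation_power_eq hr, hrv, hwq]
  simp only [mul_pow, div_pow]
  field_simp
  ring

theorem exists_volume_sliceSet_le (n : ℕ) : ∃ C : ℝ, 1 ≤ C ∧ ∃ K : ℝ, 0 ≤ K ∧
    ∀ w v : ℝ, 0 < w → 0 < v → volume (sliceSet (n + 1) w v) ≤ ENNReal.ofReal
      (K * log (1 + C / w) ^ n * w ^ (-levelExponent (n + 1)) *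
        v ^ (-(levelExponent (n + 1) - 1 / 2))) := by
  obtain ⟨C, hC1, hC⟩ := exists_le_volume_goodNodes n
  have he : 1 - 1 / (2 * (n + 1)) < (1 : ℝ) := sub_lt_self _ (by positivity)
  obtain ⟨A, hA⟩ : ∃ A : NNReal, A = ∫⁻ u, rieszKernel (1 - 1 / (2 * (n + 1))) u :=
    ⟨_, ENNReal.coe_toNNReal (lintegral_rieszKernel_lt_top he).ne⟩
  set S := ∑ β : Idx (n + 1), (β.1.2 : ℕ) with hS
  refine ⟨C, hC1, 6 ^ Fintype.card (Idx (n + 1)) * A ^ (n + 1) * 2 ^ n * 2 ^ (n + 2) *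
    (C ^ S / C ^ n) * (2 * (n + 2 : ℕ)) ^ (levelExponent (n + 1) - 1 / 2), by positivity,
    fun w v hw hv => ?_⟩
  have hW : 0 < C / w := by positivity
  have hlog : 0 ≤ log (1 + C / w) := log_nonneg (by linarith)
  have hr : 0 < v / (2 * (n + 2 : ℕ)) := by positivity
  have hpos : 0 < (v / (2 * (n + 2 : ℕ)) * (w / 2)) ^ (n + 2) := by positivity
  have hcount := mul_volume_le_of_forall_le_volume_goodNodes hr he.le hW (hC w v hw hv)
  rw [← hA, ← ENNReal.ofReal_coe_nnreal, ← ENNReal.ofReal_pow (by positivity),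
    ← ENNReal.ofReal_pow (by positivity), ← ENNReal.ofReal_pow (by positivity),
    ← ENNReal.ofReal_mul (by positivity), ← ENNReal.ofReal_mul (by positivity), ← hS,
    configuration_bound_eq (by linarith) hw hv (levelExponent_eq_sum_snd_add_two (n + 1)),
    ENNReal.ofReal_mul hpos.le] at hcount
  exact (ENNReal.mul_le_mul_iff_right (ENNReal.ofReal_pos.2 hpos).ne'
    ENNReal.ofReal_ne_top).1 hcount

theorem log_one_add_natCast_div_le {δ : ℝ} (hδ : 0 < δ) (M : ℕ) :
    log (1 + M / δ) ≤ M * log (1 + 1 / δ) := by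
  have h0 : 0 < 1 / δ := by positivity
  rw [← Real.log_pow]
  refine Real.log_le_log (by positivity) ?_
  simpa only [mul_one_div] using one_add_mul_le_pow (by linarith : -2 ≤ 1 / δ) M

/- With `q = levelExponent k`, the loss `(δ 2^j)^ε` in `v` with `ε = 1 / (4 q - 2)` uses up only a
quarter of the spare half power, so that a geometric gain `(δ 2^j)^(1/4)` survives. -/
theorem sliceSet_dyadic_power_eq {q c δ : ℝ} (hq : 1 / 2 < q) (hc : 0 < c) (hδ : 0 < δ) (j : ℕ) :
    (2⁻¹ ^ j : ℝ) ^ (-q) * (c * (δ * 2 ^ j) ^ (1 + 1 / (4 * q - 2))) ^ (-(q - 1 / 2)) =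
      c ^ (-(q - 1 / 2)) * (δ ^ (-q) * (δ * 2 ^ j) ^ (1 / 4 : ℝ)) := by
  have hd : 0 < δ * 2 ^ j := by positivity
  have hexp : (1 + 1 / (4 * q - 2)) * -(q - 1 / 2) = -q + 1 / 4 := by
    have : 4 * q - 2 ≠ 0 := by linarith
    field_simp
    ring
  have hprod : (2⁻¹ ^ j : ℝ) ^ (-q) * (δ * 2 ^ j) ^ (-q) = δ ^ (-q) := by
    rw [← mul_rpow (by positivity) hd.le, mul_left_comm, ← mul_pow,
      inv_mul_cancel₀ two_ne_zero, one_pow, mul_one]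
  rw [mul_rpow hc.le (by positivity), ← rpow_mul hd.le, hexp, rpow_add hd, ← hprod]
  ring

theorem exists_volume_sliceSet_dyadic_le (n : ℕ) {c : ℝ} (hc : 0 < c) : ∃ K : ℝ, 0 ≤ K ∧
    ∀ δ : ℝ, 0 < δ → ∀ j : ℕ, δ * 2 ^ j ≤ 4 →
      volume (sliceSet (n + 1) (2⁻¹ ^ j)
          (c * (δ * 2 ^ j) ^ (1 + 1 / (4 * levelExponent (n + 1) - 2)))) ≤
        ENNReal.ofReal (K * log (1 + 1 / δ) ^ n * δ ^ (-levelExponent (n + 1)) *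
          (δ * 2 ^ j) ^ (1 / 4 : ℝ)) := by
  obtain ⟨C, hC1, K, hK0, hK⟩ := exists_volume_sliceSet_le n
  obtain ⟨M, hM⟩ := exists_nat_ge (4 * C)
  set q := levelExponent (n + 1)
  have hq : 1 / 2 < q := by linarith [two_le_levelExponent (n + 1)]
  refine ⟨K * M ^ n * c ^ (-(q - 1 / 2)), by positivity, fun δ hδ j hj => ?_⟩
  have hscale : C / 2⁻¹ ^ j ≤ M / δ := by
    rw [inv_pow, div_inv_eq_mul, le_div_iff₀ hδ]
    nlinarith
  have hpos : 0 < C / 2⁻¹ ^ j := by positivity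
  have hlog0 : 0 ≤ log (1 + C / 2⁻¹ ^ j) := log_nonneg (by linarith)
  have hlog : log (1 + C / 2⁻¹ ^ j) ≤ M * log (1 + 1 / δ) :=
    (log_le_log (by linarith) (by linarith)).trans (log_one_add_natCast_div_le hδ M)
  refine (hK (2⁻¹ ^ j) _ (by positivity) (by positivity)).trans (ENNReal.ofReal_le_ofReal ?_)
  calc _ = K * log (1 + C / 2⁻¹ ^ j) ^ n *
        (c ^ (-(q - 1 / 2)) * (δ ^ (-q) * (δ * 2 ^ j) ^ (1 / 4 : ℝ))) := by
        rw [mul_assoc _ (_ ^ (-q)), sliceSet_dyadic_power_eq hq hc hδ]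
    _ ≤ K * (M * log (1 + 1 / δ)) ^ n *
        (c ^ (-(q - 1 / 2)) * (δ ^ (-q) * (δ * 2 ^ j) ^ (1 / 4 : ℝ))) := by gcongr
    _ = _ := by rw [mul_pow]; ring

theorem exists_two_le_mul_two_pow_le_four {δ : ℝ} (hδ : 0 < δ) (hδ1 : δ ≤ 1) :
    ∃ m : ℕ, 2 ≤ δ * 2 ^ m ∧ δ * 2 ^ m ≤ 4 := by
  obtain ⟨m, hm, hm'⟩ := exists_nat_pow_near (x := 4 / δ) ((one_le_div hδ).2 (by linarith))
    one_lt_two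
  rw [le_div_iff₀' hδ] at hm
  rw [div_lt_iff₀' hδ, pow_succ] at hm'
  exact ⟨m, by linarith, hm⟩

theorem Lset_estimate_general (k : ℕ) (hk : 1 ≤ k) :
    ∃ C : ℝ, 0 ≤ C ∧
      ∀ δ : ℝ, 0 < δ → δ ≤ 1 →
        volume (Lset k δ) ≤
          ENNReal.ofReal (C * Real.log (1 + 1 / δ) ^ (k - 1) *
            δ ^ (-((k : ℝ) * (k + 1) * (k + 2) / 6 + 2))) := by
  obtain ⟨n, rfl⟩ := Nat.exists_eq_add_of_le' hk
  rw [← levelExponent, Nat.add_sub_cancel]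
  have hε : 0 < 1 / (4 * levelExponent (n + 1) - 2) :=
    one_div_pos.2 (by linarith [two_le_levelExponent (n + 1)])
  obtain ⟨c, hc, hcover⟩ := exists_Lset_subset_iUnion_sliceSet hε (n + 1)
  obtain ⟨K, hK0, hK⟩ := exists_volume_sliceSet_dyadic_le n hc
  have hgeom : 0 < (2 : ℝ) ^ (1 / 4 : ℝ) - 1 :=
    sub_pos.2 (one_lt_rpow one_lt_two (by norm_num))
  refine ⟨K * (2 ^ (1 / 4 : ℝ) / (2 ^ (1 / 4 : ℝ) - 1) * 4 ^ (1 / 4 : ℝ)), by positivity,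
    fun δ hδ hδ1 => ?_⟩
  have hlog : 0 ≤ log (1 + 1 / δ) := log_nonneg (le_add_of_nonneg_right (by positivity))
  obtain ⟨m, hm2, hm4⟩ := exists_two_le_mul_two_pow_le_four hδ hδ1
  refine (measure_le_of_subset_iUnion_dyadic hδ (by norm_num) hm4 (by positivity)
    (hcover δ hδ m hm2 hm4) (hK δ hδ)).trans_eq ?_
  ring_nf

end LevelSetVolume

/-- Estimate (3.7) of the paper: for every `k ≥ 2` there is `C_k < ∞` with
`|L_δ| ≤ C_k (log₊ δ)^{k−1} δ^{−q_k}` for every `δ ∈ (0,1]`,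
where `log₊ δ = log(1 + 1/δ)` and `q_k = k(k+1)(k+2)/6 + 2`. -/
theorem Lset_estimate (k : ℕ) (hk : 2 ≤ k) :
    ∃ C : ℝ, 0 ≤ C ∧
      ∀ δ : ℝ, 0 < δ → δ ≤ 1 →
        volume (Lset k δ) ≤
          ENNReal.ofReal (C * Real.log (1 + 1 / δ) ^ (k - 1) *
            δ ^ (-((k : ℝ) * (k + 1) * (k + 2) / 6 + 2))) :=
  Lset_estimate_general k (one_le_two.trans hk)
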